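/- arXiv:math/0702749 — 10 statements merged into one kernel-verified Lean document; each statement's English description precedes it below -/
import Mathlib

section
/- Let 𝒪 = 𝓞_K be the ring of integers of a number field K and let n ≥ 3. Let T be a simplicial tree and let X be a metric space admitting a quasi-isometry to T. Then every action of SL(n, 𝓞_K) by isometries on X has a bounded orbit; that is, for every such action and every x ∈ X, the set {g·x : g ∈ SL(n,𝓞_K)} is bounded. -/
/-- A length function on a group which looks like a displacement function of an isometric action on
a quasi-tree: it is subadditive and symmetric, satisfies Gromov's four point condition, and chains of
bounded step pass near midpoints. -/
structure QTLen {G : Type*} [Group G] (l : G → ℝ) : Prop where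
  nonneg : ∀ g, 0 ≤ l g
  one : l 1 = 0
  mul_le : ∀ g h, l (g * h) ≤ l g + l h
  inv : ∀ g, l g⁻¹ = l g
  four : ∃ η : ℝ, 0 ≤ η ∧ ∀ a b c d : G, l (a⁻¹ * c) + l (b⁻¹ * d) ≤
    max (l (a⁻¹ * b) + l (c⁻¹ * d)) (l (a⁻¹ * d) + l (b⁻¹ * c)) + η
  bottle : ∀ s : ℝ, ∃ B : ℝ, ∀ (k : ℕ) (p : ℕ → G), p 0 = 1 →
    (∀ i < k, l ((p i)⁻¹ * p (i + 1)) ≤ s) →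
    ∃ i ≤ k, l (p i) ≤ l (p k) / 2 + B ∧ l ((p i)⁻¹ * p k) ≤ l (p k) / 2 + B

namespace QTLen

variable {G : Type*} [Group G] {l : G → ℝ}

/-- zero translation length -/
def NL {G : Type*} [Group G] (l : G → ℝ) (g : G) : Prop :=
  ∀ ε : ℝ, 0 < ε → ∃ k : ℕ, 1 ≤ k ∧ l (g ^ k) < ε * k

theorem comp (hl : QTLen l) {H : Type*} [Group H] (f : H →* G) : QTLen (fun h => l (f h)) where
  nonneg g := hl.nonneg _
  one := by simp [hl.one]
  mul_le g h := by simpa using hl.mul_le (f g) (f h)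
  inv g := by simpa using hl.inv (f g)
  four := by
    obtain ⟨η, h0, h⟩ := hl.four
    refine ⟨η, h0, fun a b c d => ?_⟩
    simpa using h (f a) (f b) (f c) (f d)
  bottle s := by
    obtain ⟨B, h⟩ := hl.bottle s
    refine ⟨B, fun k p h0 hp => ?_⟩
    simpa using h k (fun i => f (p i)) (by simp [h0]) (by simpa using hp)

theorem sq_le (hl : QTLen l) {η : ℝ} (hη : 0 ≤ η)
    (h4 : ∀ a b c d : G, l (a⁻¹ * c) + l (b⁻¹ * d) ≤
      max (l (a⁻¹ * b) + l (c⁻¹ * d)) (l (a⁻¹ * d) + l (b⁻¹ * c)) + η)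
    (g : G) (hg : NL l g) : l (g * g) ≤ l g + η := by
  by_contra hcon
  push Not at hcon
  set c := l (g * g) - l g - η with hc
  have hc0 : 0 < c := by linarith
  have h2 : l (g * g) ≤ l g + l g := hl.mul_le g g
  have key : ∀ k : ℕ, l (g ^ k) + c ≤ l (g ^ (k + 1)) := by
    intro k
    induction k with
    | zero => simp [hl.one]; linarith
    | succ k ih =>
      have := h4 1 g (g * g) (g ^ (k + 2))
      have e1 : g⁻¹ * g ^ (k + 2) = g ^ (k + 1) := by group
      have e2 : (g * g)⁻¹ * g ^ (k + 2) = g ^ k := by group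
      have e3 : g⁻¹ * (g * g) = g := by group
      rw [e1, e2, e3] at this
      simp only [inv_one, one_mul] at this
      rcases max_cases (l g + l (g ^ k)) (l (g ^ (k + 2)) + l g) with ⟨h, _⟩ | ⟨h, _⟩ <;>
        rw [h] at this <;> change _ ≤ l (g ^ (k + 2)) <;> linarith
  have key2 : ∀ k : ℕ, c * k ≤ l (g ^ k) := by
    intro k
    induction k with
    | zero => simp [hl.one]
    | succ k ih => have := key k; push_cast; linarith
  obtain ⟨k, _, hk⟩ := hg c hc0
  linarith [key2 k]

theorem ultra (hl : QTLen l) (hNL : ∀ g, NL l g) :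
    ∃ c : ℝ, ∀ g h : G, l (g * h) ≤ max (l g) (l h) + c := by
  obtain ⟨η, hη, h4⟩ := hl.four
  have hsq := fun g => hl.sq_le hη h4 g (hNL g)
  refine ⟨4 * η, fun g h => ?_⟩
  set m := max (l g) (l h) with hm
  have hgm : l g ≤ m := le_max_left _ _
  have hhm : l h ≤ m := le_max_right _ _
  have e1 : l (g * h * g) ≤ m + 2 * η := by
    have := h4 1 (g * h) (g * h * g) (g * h * (g * h))
    have a1 : (g * h)⁻¹ * (g * h * (g * h)) = g * h := by group
    have a2 : (g * h * g)⁻¹ * (g * h * (g * h)) = h := by group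
    have a3 : (g * h)⁻¹ * (g * h * g) = g := by group
    rw [a1, a2, a3] at this
    simp only [inv_one, one_mul] at this
    have hs := hsq (g * h)
    have : max (l (g * h) + l h) (l (g * h * (g * h)) + l g) ≤ l (g * h) + m + η :=
      max_le (by linarith) (by linarith)
    linarith
  have e2 : l (g * h) + l (h * g) ≤ 2 * m + 3 * η := by
    have := h4 1 g (g * h) (g * h * g)
    have a1 : g⁻¹ * (g * h * g) = h * g := by group
    have a2 : (g * h)⁻¹ * (g * h * g) = g := by group
    have a3 : g⁻¹ * (g * h) = h := by group
    rw [a1, a2, a3] at this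
    simp only [inv_one, one_mul] at this
    have : max (l g + l g) (l (g * h * g) + l h) ≤ 2 * m + 2 * η :=
      max_le (by linarith) (by linarith)
    linarith
  by_contra hcon
  push Not at hcon
  have e3 : l (h * g) ≤ m + η := by linarith
  have e4 : l (g * h⁻¹) ≤ m + 2 * η := by
    have := h4 g⁻¹ 1 h⁻¹ g
    have a1 : g⁻¹⁻¹ * h⁻¹ = g * h⁻¹ := by group
    have a2 : g⁻¹⁻¹ * g = g * g := by group
    have a3 : h⁻¹⁻¹ * g = h * g := by group
    rw [a1, a2, a3] at this
    simp only [inv_one, one_mul, mul_one, inv_inv] at this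
    rw [hl.inv h] at this
    have hs := hsq g
    have : max (l g + l (h * g)) (l (g * g) + l h) ≤ l g + m + η :=
      max_le (by linarith) (by linarith)
    linarith
  have := h4 g⁻¹ 1 h h⁻¹
  have a1 : g⁻¹⁻¹ * h = g * h := by group
  have a2 : g⁻¹⁻¹ * h⁻¹ = g * h⁻¹ := by group
  have a3 : h⁻¹ * h⁻¹ = (h * h)⁻¹ := by group
  rw [a1, a2, a3] at this
  simp only [inv_one, one_mul, mul_one, inv_inv] at this
  rw [hl.inv h, hl.inv] at this
  have hs := hsq h
  have : max (l g + l (h * h)) (l (g * h⁻¹) + l h) ≤ l h + m + 2 * η :=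
    max_le (by linarith) (by linarith)
  linarith

/-- A group generated by a set of bounded displacement, all of whose elements have zero translation
length, has bounded orbits. -/
theorem bounded (hl : QTLen l) (hNL : ∀ g, NL l g) (s : ℝ)
    (hgen : Subgroup.closure {g | l g ≤ s} = ⊤) : ∃ C : ℝ, ∀ g, l g ≤ C := by
  obtain ⟨c, hc⟩ := hl.ultra hNL
  obtain ⟨B, hB⟩ := hl.bottle s
  refine ⟨2 * (B + c), fun g => ?_⟩
  have hchain : ∀ g : G, g ∈ Subgroup.closure {g | l g ≤ s} → ∃ (k : ℕ) (p : ℕ → G), p 0 = 1 ∧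
      p k = g ∧ (∀ i < k, l ((p i)⁻¹ * p (i + 1)) ≤ s) := by
    intro g hg
    have step : ∀ (x y : G), l y ≤ s → (∃ (k : ℕ) (p : ℕ → G), p 0 = 1 ∧
      p k = x ∧ (∀ i < k, l ((p i)⁻¹ * p (i + 1)) ≤ s)) → (∃ (k : ℕ) (p : ℕ → G), p 0 = 1 ∧
      p k = x * y ∧ (∀ i < k, l ((p i)⁻¹ * p (i + 1)) ≤ s)) := by
      rintro x y hy ⟨k, p, h0, hk, hp⟩
      refine ⟨k + 1, fun i => if i ≤ k then p i else x * y, by simp [h0], by simp, ?_⟩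
      intro i hi
      by_cases h : i < k
      · have h1 : i ≤ k := h.le
        have h2 : i + 1 ≤ k := h
        simpa [h1, h2] using hp i h
      · have : i = k := by omega
        subst this
        simpa [hk] using hy
    induction hg using Subgroup.closure_induction_right with
    | one => exact ⟨0, fun _ => 1, rfl, rfl, by simp⟩
    | mul_right x hx y hy ih => exact step x y hy ih
    | mul_inv_cancel x hx y hy ih => exact step x y⁻¹ (by rw [hl.inv]; exact hy) ih
  obtain ⟨k, p, h0, hk, hp⟩ := hchain g (by rw [hgen]; trivial)
  obtain ⟨i, _, h1, h2⟩ := hB k p h0 hp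
  rw [hk] at h1 h2
  have := hc (p i) ((p i)⁻¹ * g)
  rw [mul_inv_cancel_left] at this
  have : max (l (p i)) (l ((p i)⁻¹ * g)) ≤ l g / 2 + B := max_le h1 h2
  linarith

end QTLen


namespace QTGeom

open SimpleGraph

variable {X : Type*} {G : SimpleGraph X}

theorem chain_dist (hG : G.Connected) (s : ℕ) (p : ℕ → X) (k : ℕ)
    (hp : ∀ i < k, G.dist (p i) (p (i + 1)) ≤ s) (i j : ℕ) (hij : i ≤ j) (hj : j ≤ k) :
    G.dist (p i) (p j) ≤ s * (j - i) := by
  induction j, hij using Nat.le_induction with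
  | base => simp
  | succ j hij ih =>
    have h1 := ih (by omega)
    have h2 := hp j (by omega)
    have h3 := hG.dist_triangle (u := p i) (v := p j) (w := p (j + 1))
    have : j + 1 - i = (j - i) + 1 := by omega
    rw [this, mul_add, mul_one]
    omega

theorem geo_mem (hG : G.Connected) {x y : X} (w : G.Walk x y) (hw : w.length = G.dist x y)
    (t : X) (ht : t ∈ w.support) : G.dist x t + G.dist t y = G.dist x y := by
  classical
  have h1 := congrArg Walk.length (w.take_spec ht)
  rw [Walk.length_append] at h1
  have h2 := G.dist_le (w.takeUntil t ht)
  have h3 := G.dist_le (w.dropUntil t ht)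
  have h4 := hG.dist_triangle (u := x) (v := t) (w := y)
  omega

theorem walk_step {x y : X} (w : G.Walk x y) (i : ℕ) (hi : i < w.length) :
    G.dist (w.getVert i) (w.getVert (i + 1)) ≤ 1 := by
  rw [dist_eq_one_iff_adj.2 (w.adj_getVert_succ hi)]

theorem geo_dist (hG : G.Connected) {x y : X} (w : G.Walk x y) (hw : w.length = G.dist x y)
    (i j : ℕ) (hij : i ≤ j) (hj : j ≤ w.length) :
    G.dist (w.getVert i) (w.getVert j) = j - i := by
  have key := chain_dist hG 1 w.getVert w.length (walk_step w)
  have h1 := key i j hij hj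
  have h2 := key 0 i (by omega) (by omega)
  have h3 := key j w.length hj le_rfl
  have h4 := hG.dist_triangle (u := x) (v := w.getVert i) (w := w.getVert j)
  have h5 := hG.dist_triangle (u := x) (v := w.getVert j) (w := y)
  simp only [Walk.getVert_zero, Walk.getVert_length] at *
  omega

theorem chain_walk (hG : G.Connected) (s : ℕ) (p : ℕ → X) (k : ℕ)
    (hp : ∀ i < k, G.dist (p i) (p (i + 1)) ≤ s) :
    ∃ W : G.Walk (p 0) (p k), ∀ v ∈ W.support, ∃ i ≤ k, G.dist v (p i) ≤ s := by
  induction k with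
  | zero => exact ⟨Walk.nil, fun v hv => ⟨0, le_rfl, by simp at hv; simp [hv]⟩⟩
  | succ k ih =>
    obtain ⟨W, hW⟩ := ih (fun i hi => hp i (by omega))
    obtain ⟨w, hw⟩ := hG.exists_walk_length_eq_dist (p k) (p (k + 1))
    refine ⟨W.append w, fun v hv => ?_⟩
    rw [Walk.mem_support_append_iff] at hv
    rcases hv with hv | hv
    · obtain ⟨i, hi, h⟩ := hW v hv
      exact ⟨i, by omega, h⟩
    · refine ⟨k, by omega, ?_⟩
      have := geo_mem hG w hw v hv
      have h2 := hp k (by omega)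
      rw [dist_comm]
      omega

theorem tree_mem {V : Type*} {T : SimpleGraph V} (hT : T.IsTree) {u v : V} (W : T.Walk u v) (t : V)
    (ht : T.dist u t + T.dist t v = T.dist u v) : t ∈ W.support := by
  classical
  obtain ⟨w1, h1⟩ := hT.connected.exists_walk_length_eq_dist u t
  obtain ⟨w2, h2⟩ := hT.connected.exists_walk_length_eq_dist t v
  have hp : (w1.append w2).IsPath := by
    apply Walk.isPath_of_length_eq_dist
    rw [Walk.length_append]; omega
  have := (hT.isAcyclic.subsingleton_path u v).elim ⟨w1.append w2, hp⟩
    ⟨W.bypass, W.bypass_isPath⟩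
  have h3 : w1.append w2 = W.bypass := congrArg Subtype.val this
  apply W.support_bypass_subset_support
  rw [← h3, Walk.mem_support_append_iff]
  left; simp

theorem bottleneck {V : Type*} {T : SimpleGraph V} (hG : G.Connected) (hT : T.IsTree) (q : X → V)
    (A A' : ℕ) (h1 : ∀ a b, G.Adj a b → T.dist (q a) (q b) ≤ A)
    (h2 : ∀ a b, G.dist a b ≤ A' * T.dist (q a) (q b) + A') :
    ∃ B : ℕ, ∀ (x y : X) (W : G.Walk x y) (m : X), G.dist x m + G.dist m y = G.dist x y →
      ∃ v ∈ W.support, G.dist v m ≤ B := by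
  have hTc := hT.connected
  have L1 : ∀ (x y : X) (W : G.Walk x y) (t : V),
      T.dist (q x) t + T.dist t (q y) = T.dist (q x) (q y) →
      ∃ i ≤ W.length, T.dist t (q (W.getVert i)) ≤ A := by
    intro x y W t ht
    obtain ⟨W', hW'⟩ := chain_walk hTc A (fun i => q (W.getVert i)) W.length
      (fun i hi => h1 _ _ (W.adj_getVert_succ hi))
    refine hW' t (tree_mem hT W' t ?_)
    simpa using ht
  refine ⟨(A' * (2 * A + 1) + A') + (A' * (2 * A) + A'), fun x y W m hm => ?_⟩
  obtain ⟨w1, hw1⟩ := hG.exists_walk_length_eq_dist x m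
  obtain ⟨w2, hw2⟩ := hG.exists_walk_length_eq_dist m y
  obtain ⟨τ, hτ⟩ := hTc.exists_walk_length_eq_dist (q x) (q y)
  set σ := w1.append w2 with hσ
  have hσl : σ.length = G.dist x y := by rw [hσ, Walk.length_append]; omega
  set j0 := G.dist x m with hj0
  have hσm : σ.getVert j0 = m := by
    rw [hσ, Walk.getVert_append]
    simp [hw1]
  have hτd := geo_dist hTc τ hτ
  have hσd := geo_dist hG σ hσl
  have hτg : ∀ j ≤ τ.length, T.dist (q x) (τ.getVert j) + T.dist (τ.getVert j) (q y)
      = T.dist (q x) (q y) := by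
    intro j hj
    exact geo_mem hTc τ hτ _ (τ.getVert_mem_support j)
  have hf : ∀ j, ∃ i, j ≤ τ.length → i ≤ σ.length ∧ T.dist (τ.getVert j) (q (σ.getVert i)) ≤ A := by
    intro j
    by_cases hj : j ≤ τ.length
    · obtain ⟨i, hi, h⟩ := L1 x y σ _ (hτg j hj)
      exact ⟨i, fun _ => ⟨hi, h⟩⟩
    · exact ⟨0, fun h => absurd h hj⟩
  choose f hf using hf
  have hfin : ∀ j ≤ τ.length, G.dist (σ.getVert (f j)) m ≤ A' * (2 * A + 1) + A' →
      ∃ v ∈ W.support, G.dist v m ≤ (A' * (2 * A + 1) + A') + (A' * (2 * A) + A') := by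
    intro j hj hd
    obtain ⟨i, hi, h⟩ := L1 x y W _ (hτg j hj)
    refine ⟨W.getVert i, W.getVert_mem_support i, ?_⟩
    have e1 := hG.dist_triangle (u := W.getVert i) (v := σ.getVert (f j)) (w := m)
    have e2 := h2 (W.getVert i) (σ.getVert (f j))
    have e3 := hTc.dist_triangle (u := q (W.getVert i)) (v := τ.getVert j)
      (w := q (σ.getVert (f j)))
    have e4 := (hf j hj).2
    rw [T.dist_comm (u := q (W.getVert i)) (v := τ.getVert j)] at e3
    have e5 : A' * T.dist (q (W.getVert i)) (q (σ.getVert (f j))) ≤ A' * (2 * A) :=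
      Nat.mul_le_mul_left _ (by omega)
    omega
  have hj0L : j0 ≤ σ.length := by omega
  have hle : A' * A ≤ A' * (2 * A + 1) := Nat.mul_le_mul_left _ (by omega)
  by_cases hex : ∃ j, j ≤ τ.length ∧ j0 ≤ f j
  · classical
    obtain ⟨hj1, hj2⟩ := Nat.find_spec hex
    set j := Nat.find hex with hj
    refine hfin j hj1 ?_
    rw [← hσm, G.dist_comm, hσd _ _ hj2 (hf j hj1).1]
    rcases Nat.eq_zero_or_pos j with h0 | hpos
    · have e1 := h2 (σ.getVert 0) (σ.getVert (f j))
      rw [hσd _ _ (Nat.zero_le _) (hf j hj1).1] at e1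
      have e2 := (hf j hj1).2
      rw [h0] at e2
      rw [h0] at e1
      simp only [Walk.getVert_zero] at e1 e2
      have : A' * T.dist (q x) (q (σ.getVert (f 0))) ≤ A' * A := Nat.mul_le_mul_left _ e2
      rw [h0]
      omega
    · have hmin := Nat.find_min hex (m := j - 1) (by omega)
      push Not at hmin
      have hm1 := hmin (by omega)
      have e1 := h2 (σ.getVert (f (j - 1))) (σ.getVert (f j))
      rw [hσd _ _ (by omega) (hf j hj1).1] at e1
      have e2 := (hf j hj1).2
      have e3 := (hf (j - 1) (by omega)).2
      have e4 := hτd (j - 1) j (by omega) hj1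
      have e5 := hTc.dist_triangle (u := q (σ.getVert (f (j - 1)))) (v := τ.getVert (j - 1))
        (w := q (σ.getVert (f j)))
      have e6 := hTc.dist_triangle (u := τ.getVert (j - 1)) (v := τ.getVert j)
        (w := q (σ.getVert (f j)))
      rw [T.dist_comm (u := q (σ.getVert (f (j - 1)))) (v := τ.getVert (j - 1))] at e5
      have : A' * T.dist (q (σ.getVert (f (j - 1)))) (q (σ.getVert (f j))) ≤ A' * (2 * A + 1) :=
        Nat.mul_le_mul_left _ (by omega)
      omega
  · push Not at hex
    have hlt := hex τ.length le_rfl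
    refine hfin τ.length le_rfl ?_
    obtain ⟨c1, c2⟩ := hf τ.length le_rfl
    rw [← hσm, hσd _ _ hlt.le hj0L]
    have e1 := h2 (σ.getVert (f τ.length)) (σ.getVert σ.length)
    rw [hσd _ _ c1 le_rfl] at e1
    rw [Walk.getVert_length] at e1 c2
    rw [T.dist_comm] at c2
    have : A' * T.dist (q (σ.getVert (f τ.length))) (q y) ≤ A' * A := Nat.mul_le_mul_left _ c2
    omega

theorem centre (hG : G.Connected) (B : ℕ)
    (hB : ∀ (x y : X) (W : G.Walk x y) (m : X), G.dist x m + G.dist m y = G.dist x y →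
      ∃ v ∈ W.support, G.dist v m ≤ B) {x z : X} (σ : G.Walk x z) (hσ : σ.length = G.dist x z)
    (y : X) : ∃ i ≤ σ.length, G.dist y (σ.getVert i) + i ≤ G.dist x y + 2 * (B + 1) ∧
      G.dist y (σ.getVert i) + (σ.length - i) ≤ G.dist y z + 2 * (B + 1) := by
  classical
  have hσd := geo_dist hG σ hσ
  have hx : ∀ i ≤ σ.length, G.dist x (σ.getVert i) = i := fun i hi => by
    simpa using hσd 0 i (by omega) hi
  have hz : ∀ i ≤ σ.length, G.dist (σ.getVert i) z = σ.length - i := fun i hi => by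
    simpa using hσd i _ hi le_rfl
  have hPQ : ∀ i ≤ σ.length, G.dist y (σ.getVert i) + i ≤ G.dist x y + 2 * B ∨
      G.dist y (σ.getVert i) + (σ.length - i) ≤ G.dist y z + 2 * B := by
    intro i hi
    obtain ⟨w1, hw1⟩ := hG.exists_walk_length_eq_dist x y
    obtain ⟨w2, hw2⟩ := hG.exists_walk_length_eq_dist y z
    obtain ⟨v, hv, hd⟩ := hB x z (w1.append w2) (σ.getVert i)
      (geo_mem hG σ hσ _ (σ.getVert_mem_support i))
    rw [Walk.mem_support_append_iff] at hv
    have t1 := hG.dist_triangle (u := y) (v := v) (w := σ.getVert i)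
    have hxi := hx i hi
    have hzi := hz i hi
    rcases hv with hv | hv
    · left
      have := geo_mem hG w1 hw1 v hv
      have t2 := hG.dist_triangle (u := x) (v := v) (w := σ.getVert i)
      rw [G.dist_comm (u := v) (v := y)] at this
      omega
    · right
      have := geo_mem hG w2 hw2 v hv
      have t2 := hG.dist_triangle (u := σ.getVert i) (v := v) (w := z)
      rw [G.dist_comm (u := σ.getVert i) (v := v)] at t2
      omega
  have hex : ∃ i, i ≤ σ.length ∧
      G.dist y (σ.getVert i) + (σ.length - i) ≤ G.dist y z + 2 * B :=
    ⟨σ.length, le_rfl, by simp⟩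
  obtain ⟨h1, h2⟩ := Nat.find_spec hex
  set i := Nat.find hex with hi
  refine ⟨i, h1, ?_, by omega⟩
  rcases Nat.eq_zero_or_pos i with h0 | hpos
  · rw [h0]; simp [G.dist_comm (u := x) (v := y)]
  · have hmin := Nat.find_min hex (m := i - 1) (by omega)
    rcases hPQ (i - 1) (by omega) with h | h
    · have t := hG.dist_triangle (u := y) (v := σ.getVert (i - 1)) (w := σ.getVert i)
      have := hσd (i - 1) i (by omega) h1
      omega
    · exact absurd ⟨by omega, h⟩ hmin

theorem four (hG : G.Connected) (B : ℕ)
    (hB : ∀ (x y : X) (W : G.Walk x y) (m : X), G.dist x m + G.dist m y = G.dist x y →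
      ∃ v ∈ W.support, G.dist v m ≤ B) (x y z w : X) :
    G.dist x z + G.dist y w ≤
      max (G.dist x y + G.dist z w) (G.dist x w + G.dist y z) + 4 * (B + 1) := by
  obtain ⟨σ, hσ⟩ := hG.exists_walk_length_eq_dist x z
  obtain ⟨i, hi, a1, a2⟩ := centre hG B hB σ hσ y
  obtain ⟨j, hj, b1, b2⟩ := centre hG B hB σ hσ w
  have t1 := hG.dist_triangle (u := y) (v := σ.getVert i) (w := w)
  have t2 := hG.dist_triangle (u := σ.getVert i) (v := σ.getVert j) (w := w)
  rw [G.dist_comm (u := σ.getVert j) (v := w)] at t2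
  rw [G.dist_comm (u := w) (v := z)] at b2
  rcases le_total i j with h | h
  · have := geo_dist hG σ hσ i j h hj
    omega
  · have := geo_dist hG σ hσ j i h hi
    rw [G.dist_comm] at this
    omega

theorem qtlen_of_graph {Γ : Type*} [Group Γ] (hG : G.Connected) (B : ℕ)
    (hB : ∀ (x y : X) (W : G.Walk x y) (m : X), G.dist x m + G.dist m y = G.dist x y →
      ∃ v ∈ W.support, G.dist v m ≤ B) (φ : Γ → X → X) (h1 : ∀ x, φ 1 x = x)
    (hmul : ∀ g h x, φ (g * h) x = φ g (φ h x))
    (hd : ∀ g x y, G.dist (φ g x) (φ g y) = G.dist x y) (x : X) :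
    QTLen (fun g : Γ => (G.dist x (φ g x) : ℝ)) := by
  have hinv : ∀ a b, G.dist x (φ (a⁻¹ * b) x) = G.dist (φ a x) (φ b x) := by
    intro a b
    rw [← hd a, ← hmul]; simp
  refine ⟨fun g => by positivity, by simp [h1], ?_, ?_, ?_, ?_⟩
  · intro g h
    have := hG.dist_triangle (u := x) (v := φ g x) (w := φ (g * h) x)
    rw [hmul g h, hd] at this
    rw [hmul]
    exact_mod_cast this
  · intro g
    have := hinv g 1
    rw [mul_one, h1, G.dist_comm (u := φ g x)] at this
    exact_mod_cast this
  · refine ⟨4 * (B + 1), by positivity, fun a b c d => ?_⟩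
    have := four hG B hB (φ a x) (φ b x) (φ c x) (φ d x)
    simp only [hinv]
    exact_mod_cast this
  · intro s
    refine ⟨(B + ⌈s⌉₊ + 1 : ℕ), fun k p hp0 hp => ?_⟩
    obtain ⟨W, hW⟩ := chain_walk hG ⌈s⌉₊ (fun i => φ (p i) x) k (by
      intro i hi
      have h := hp i hi
      rw [hinv] at h
      exact_mod_cast h.trans (Nat.le_ceil s))
    obtain ⟨σ, hσ⟩ := hG.exists_walk_length_eq_dist (φ (p 0) x) (φ (p k) x)
    set L := G.dist (φ (p 0) x) (φ (p k) x) with hL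
    have hs := geo_dist hG σ hσ
    obtain ⟨v, hv, hvm⟩ := hB _ _ W (σ.getVert (L / 2))
      (geo_mem hG σ hσ _ (σ.getVert_mem_support _))
    obtain ⟨i, hi, hvi⟩ := hW v hv
    refine ⟨i, hi, ?_, ?_⟩
    all_goals
      have e1 := hs 0 (L / 2) (by omega) (by omega)
      have e2 := hs (L / 2) L (by omega) (by omega)
      rw [← hσ, Walk.getVert_length] at e2
      rw [Walk.getVert_zero] at e1
      rw [hσ] at e2
      have t1 := hG.dist_triangle (u := φ (p 0) x) (v := σ.getVert (L / 2)) (w := φ (p i) x)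
      have t2 := hG.dist_triangle (u := φ (p i) x) (v := σ.getVert (L / 2)) (w := φ (p k) x)
      have t3 := hG.dist_triangle (u := σ.getVert (L / 2)) (v := v) (w := φ (p i) x)
      rw [G.dist_comm (u := σ.getVert (L / 2)) (v := v)] at t3
      rw [G.dist_comm (u := φ (p i) x) (v := σ.getVert (L / 2))] at t2
      try rw [hinv]
      have hx0 : φ (p 0) x = x := by rw [hp0, h1]
      have hL' : G.dist x (φ (p k) x) = L := by rw [hL, hx0]
      have hxi : G.dist x (φ (p i) x) = G.dist (φ (p 0) x) (φ (p i) x) := by rw [hx0]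
      rw [hL']
    · have : 2 * G.dist x (φ (p i) x) ≤ L + 2 * (B + ⌈s⌉₊ + 1) := by omega
      have h : (2 : ℝ) * G.dist x (φ (p i) x) ≤ L + 2 * (B + ⌈s⌉₊ + 1 : ℕ) := by exact_mod_cast this
      linarith
    · have : 2 * G.dist (φ (p i) x) (φ (p k) x) ≤ L + 2 * (B + ⌈s⌉₊ + 1) := by omega
      have h : (2 : ℝ) * G.dist (φ (p i) x) (φ (p k) x) ≤ L + 2 * (B + ⌈s⌉₊ + 1 : ℕ) := by
        exact_mod_cast this
      linarith

theorem exists_qtlen {Γ : Type*} [Group Γ] (X : Type*) [MetricSpace X]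
    (V : Type*) (T : SimpleGraph V) (hT : T.IsTree)
    (q : X → V) (Kq Cq : ℝ) (hKq : 1 ≤ Kq) (hCq : 0 ≤ Cq)
    (hqi_lower : ∀ x₁ x₂ : X, dist x₁ x₂ / Kq - Cq ≤ (T.dist (q x₁) (q x₂) : ℝ))
    (hqi_upper : ∀ x₁ x₂ : X, (T.dist (q x₁) (q x₂) : ℝ) ≤ Kq * dist x₁ x₂ + Cq)
    (hdense : ∀ v : V, ∃ x : X, (T.dist v (q x) : ℝ) ≤ Cq)
    (ρ : Γ →* (X ≃ᵢ X)) (x : X) :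
    ∃ l : Γ → ℝ, QTLen l ∧ ∃ R : ℝ, 0 ≤ R ∧ ∀ g, dist x (ρ g x) ≤ R * l g := by
  have hTc := hT.connected
  have hlow : ∀ a b : X, dist a b ≤ Kq * (T.dist (q a) (q b) + Cq) := by
    intro a b
    have := hqi_lower a b
    have h0 : 0 < Kq := by linarith
    rw [sub_le_iff_le_add, div_le_iff₀ h0] at this
    linarith
  set R : ℝ := Kq * (3 * Cq + 1) with hR
  have hR0 : 0 ≤ R := by positivity
  let G : SimpleGraph X :=
    { Adj := fun a b => a ≠ b ∧ dist a b ≤ R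
      symm := ⟨fun a b h => ⟨h.1.symm, by rw [_root_.dist_comm]; exact h.2⟩⟩
      loopless := ⟨fun a h => h.1 rfl⟩ }
  have hstep : ∀ a b : X, dist a b ≤ R → ∃ w : G.Walk a b, w.length ≤ 1 := by
    intro a b h
    by_cases hab : a = b
    · subst hab; exact ⟨Walk.nil, by simp⟩
    · exact ⟨Walk.cons (show G.Adj a b from ⟨hab, h⟩) Walk.nil, by simp⟩
  have hwalk : ∀ a b : X, ∃ w : G.Walk a b, w.length ≤ T.dist (q a) (q b) + 1 := by
    intro a b
    obtain ⟨τ, hτ⟩ := hTc.exists_walk_length_eq_dist (q a) (q b)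
    choose r hr using hdense
    have key : ∀ j ≤ τ.length, ∃ w : G.Walk a (r (τ.getVert j)), w.length ≤ j + 1 := by
      intro j
      induction j with
      | zero =>
        intro _
        obtain ⟨w, hw⟩ := hstep a (r (τ.getVert 0)) (by
          refine (hlow _ _).trans ?_
          have := hr (τ.getVert 0)
          rw [Walk.getVert_zero] at *
          rw [hR]
          apply mul_le_mul_of_nonneg_left _ (by linarith)
          linarith)
        exact ⟨w, by omega⟩
      | succ j ih =>
        intro hj
        obtain ⟨w, hw⟩ := ih (by omega)
        obtain ⟨w', hw'⟩ := hstep (r (τ.getVert j)) (r (τ.getVert (j + 1))) (by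
          refine (hlow _ _).trans ?_
          have e1 := hr (τ.getVert j)
          have e2 := hr (τ.getVert (j + 1))
          have e3 := walk_step τ j (by omega)
          have t1 := hTc.dist_triangle (u := q (r (τ.getVert j))) (v := τ.getVert j)
            (w := q (r (τ.getVert (j + 1))))
          have t2 := hTc.dist_triangle (u := τ.getVert j) (v := τ.getVert (j + 1))
            (w := q (r (τ.getVert (j + 1))))
          rw [T.dist_comm (u := q (r (τ.getVert j))) (v := τ.getVert j)] at t1
          have t3 : T.dist (q (r (τ.getVert j))) (q (r (τ.getVert (j + 1)))) ≤
            T.dist (τ.getVert j) (q (r (τ.getVert j))) + 1 +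
            T.dist (τ.getVert (j + 1)) (q (r (τ.getVert (j + 1)))) := by omega
          have t4 : (T.dist (q (r (τ.getVert j))) (q (r (τ.getVert (j + 1)))) : ℝ) ≤
            T.dist (τ.getVert j) (q (r (τ.getVert j))) + 1 +
            T.dist (τ.getVert (j + 1)) (q (r (τ.getVert (j + 1)))) := by exact_mod_cast t3
          rw [hR]
          apply mul_le_mul_of_nonneg_left _ (by linarith)
          linarith)
        exact ⟨w.append w', by rw [Walk.length_append]; omega⟩
    rcases Nat.eq_zero_or_pos τ.length with h0 | hpos
    · obtain ⟨w, hw⟩ := hstep a b (by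
        refine (hlow _ _).trans ?_
        rw [← hτ, h0, hR]
        apply mul_le_mul_of_nonneg_left _ (by linarith)
        push_cast; linarith)
      exact ⟨w, by omega⟩
    · obtain ⟨w, hw⟩ := key (τ.length - 1) (by omega)
      obtain ⟨w', hw'⟩ := hstep (r (τ.getVert (τ.length - 1))) b (by
        refine (hlow _ _).trans ?_
        have e1 := hr (τ.getVert (τ.length - 1))
        have e3 := walk_step τ (τ.length - 1) (by omega)
        rw [Nat.sub_add_cancel hpos, Walk.getVert_length] at e3
        have t1 := hTc.dist_triangle (u := q (r (τ.getVert (τ.length - 1))))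
          (v := τ.getVert (τ.length - 1)) (w := q b)
        rw [T.dist_comm (u := q (r (τ.getVert (τ.length - 1))))
          (v := τ.getVert (τ.length - 1))] at t1
        have t3 : T.dist (q (r (τ.getVert (τ.length - 1)))) (q b) ≤
            T.dist (τ.getVert (τ.length - 1)) (q (r (τ.getVert (τ.length - 1)))) + 1 := by omega
        have t4 : (T.dist (q (r (τ.getVert (τ.length - 1)))) (q b) : ℝ) ≤
            T.dist (τ.getVert (τ.length - 1)) (q (r (τ.getVert (τ.length - 1)))) + 1 := by
          exact_mod_cast t3
        rw [hR]
        apply mul_le_mul_of_nonneg_left _ (by linarith)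
        linarith)
      exact ⟨w.append w', by rw [Walk.length_append]; omega⟩
  have hG : G.Connected := by
    have : Nonempty X := ⟨x⟩
    exact ⟨fun a b => ⟨(hwalk a b).choose⟩⟩
  obtain ⟨B, hB⟩ := bottleneck hG hT q ⌈Kq * R + Cq⌉₊ 1 (by
      intro a b hab
      have := (hqi_upper a b).trans
        (add_le_add (mul_le_mul_of_nonneg_left hab.2 (by linarith : (0 : ℝ) ≤ Kq)) le_rfl)
      exact_mod_cast this.trans (Nat.le_ceil _)) (by
      intro a b
      obtain ⟨w, hw⟩ := hwalk a b
      have := G.dist_le w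
      omega)
  have hle : ∀ g a b, G.dist (ρ g a) (ρ g b) ≤ G.dist a b := by
    intro g a b
    obtain ⟨w, hw⟩ := hG.exists_walk_length_eq_dist a b
    let f : G →g G := ⟨fun a => ρ g a, fun {a b} h => ⟨fun h' => h.1 ((ρ g).injective h'), by
      rw [(ρ g).dist_eq]; exact h.2⟩⟩
    have := G.dist_le (w.map f)
    rw [Walk.length_map, hw] at this
    exact this
  refine ⟨_, qtlen_of_graph hG B hB (fun g x => ρ g x) (by simp) (by simp) ?_ x, R, hR0, ?_⟩
  · intro g a b
    apply le_antisymm (hle g a b)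
    have := hle g⁻¹ (ρ g a) (ρ g b)
    simpa [← IsometryEquiv.mul_apply, ← map_mul] using this
  · intro g
    obtain ⟨w, hw⟩ := hG.exists_walk_length_eq_dist x (ρ g x)
    show _ ≤ R * (G.dist x (ρ g x) : ℝ)
    rw [← hw]
    generalize ρ g x = y at w
    clear hw
    induction w with
    | nil => simp
    | @cons u v w h p ih =>
      have := dist_triangle u v w
      have h2 : dist u v ≤ R := h.2
      rw [Walk.length_cons]
      push_cast
      linarith

end QTGeom

namespace QTLen
open Matrix Matrix.SpecialLinearGroup

variable {R : Type*} [CommRing R] {ι : Type*} [Fintype ι] [DecidableEq ι]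

theorem transvection_pow {i j : ι} (hij : i ≠ j) (b : R) (k : ℕ) :
    (transvection hij b) ^ k = transvection hij (k * b) := by
  induction k with
  | zero => simp
  | succ k ih => rw [pow_succ, ih, ← transvection_add]; congr 1; push_cast; ring

theorem transvection_comm {i j k : ι} (hij : i ≠ j) (hik : i ≠ k) (hkj : k ≠ j) (a b : R) :
    transvection hik a * transvection hkj b * (transvection hik a)⁻¹ * (transvection hkj b)⁻¹
      = transvection hij (a * b) := by
  rw [mul_inv_eq_iff_eq_mul, mul_inv_eq_iff_eq_mul]
  apply Subtype.ext
  simp only [Matrix.SpecialLinearGroup.coe_mul, transvection_coe, mul_add, add_mul, one_mul, mul_one,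
    single_mul_single_same, single_mul_single_of_ne _ _ _ _ hij.symm,
    single_mul_single_of_ne _ _ _ _ hkj.symm, zero_mul]
  abel

variable {l : SpecialLinearGroup ι R → ℝ}

theorem pow_le {G : Type*} [Group G] {l : G → ℝ} (hl : QTLen l) (g : G) (m : ℕ) :
    l (g ^ m) ≤ m * l g := by
  induction m with
  | zero => simp [hl.one]
  | succ m ih =>
    rw [pow_succ]
    have := hl.mul_le (g ^ m) g
    push_cast
    linarith

theorem transvection_NL (hl : QTLen l) {i j k : ι} (hij : i ≠ j) (hik : i ≠ k) (hkj : k ≠ j)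
    (b : R) : NL l (transvection hij b) := by
  intro ε hε
  set c := 2 * l (transvection hik (1 : R)) + 2 * l (transvection hkj b) with hc
  have hc0 : 0 ≤ c := by
    have := hl.nonneg (transvection hik (1 : R))
    have := hl.nonneg (transvection hkj b)
    linarith
  obtain ⟨m, hm⟩ := exists_nat_gt (c / ε)
  have hm0 : (0 : ℝ) < m := lt_of_le_of_lt (by positivity) hm
  have hm1 : 0 < m := by exact_mod_cast hm0
  refine ⟨m * m, Nat.mul_pos hm1 hm1, ?_⟩
  have e : transvection hij b ^ (m * m) = (transvection hik (1 : R)) ^ m * (transvection hkj b) ^ m *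
      ((transvection hik (1 : R)) ^ m)⁻¹ * ((transvection hkj b) ^ m)⁻¹ := by
    rw [transvection_pow, transvection_pow, transvection_pow, transvection_comm hij hik hkj]
    congr 1; push_cast; ring
  rw [e]
  have h1 := pow_le hl (transvection hik (1 : R)) m
  have h2 := pow_le hl (transvection hkj b) m
  set x := transvection hik (1 : R) ^ m
  set y := transvection hkj b ^ m
  have h3 := hl.mul_le (x * y * x⁻¹) y⁻¹
  have h4 := hl.mul_le (x * y) x⁻¹
  have h5 := hl.mul_le x y
  rw [hl.inv] at h3 h4
  rw [div_lt_iff₀ hε] at hm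
  have : l (x * y * x⁻¹ * y⁻¹) ≤ m * c := by rw [hc]; linarith
  push_cast
  nlinarith

/-- a group generated by finitely many elements -/
theorem fg_closure {G : Type*} [Group G] [Group.FG G] (l : G → ℝ) (h0 : ∀ g, 0 ≤ l g) :
    ∃ s, Subgroup.closure {g | l g ≤ s} = ⊤ := by
  obtain ⟨_, S, -, hS⟩ := Group.fg_iff'.1 ‹Group.FG G›
  refine ⟨∑ g ∈ S, l g, top_le_iff.1 ?_⟩
  rw [← hS]
  apply Subgroup.closure_mono
  intro g hg
  exact Finset.single_le_sum (f := l) (fun i _ => h0 i) hg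

theorem transvection_bdd_one [Module.Finite ℤ R] (hl : QTLen l) {i j k : ι} (hij : i ≠ j)
    (hik : i ≠ k) (hkj : k ≠ j) : ∃ C, ∀ b : R, l (transvection hij b) ≤ C := by
  let f : Multiplicative R →* SpecialLinearGroup ι R :=
    { toFun := fun b => transvection hij b.toAdd
      map_one' := by simp
      map_mul' := fun a b => by simp [transvection_add] }
  have hf := hl.comp f
  have : AddGroup.FG R := by
    exact Module.Finite.iff_addGroup_fg.1 inferInstance
  have : Group.FG (Multiplicative R) := inferInstance
  obtain ⟨s, hs⟩ := fg_closure _ hf.nonneg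
  obtain ⟨C, hC⟩ := hf.bounded (fun g => by
    intro ε hε
    obtain ⟨k, h1, h2⟩ := transvection_NL hl hij hik hkj g.toAdd ε hε
    exact ⟨k, h1, by show l (f (g ^ k)) < _; rw [map_pow]; exact h2⟩) s hs
  exact ⟨C, fun b => hC (Multiplicative.ofAdd b)⟩

theorem transvection_bdd [Module.Finite ℤ R] (hl : QTLen l) (h3 : 3 ≤ Fintype.card ι) :
    ∃ C, 0 ≤ C ∧ ∀ (i j : ι) (hij : i ≠ j) (b : R), l (transvection hij b) ≤ C := by
  have h : ∀ p : ι × ι, ∃ C, ∀ (hij : p.1 ≠ p.2) (b : R), l (transvection hij b) ≤ C := by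
    intro p
    by_cases hij : p.1 ≠ p.2
    · have : ∃ k, k ∉ ({p.1, p.2} : Finset ι) := by
        by_contra hcon
        push Not at hcon
        have h1 : (Finset.univ : Finset ι) ⊆ {p.1, p.2} := fun k _ => hcon k
        have h2 := Finset.card_le_card h1
        have h4 := Finset.card_le_two (a := p.1) (b := p.2)
        rw [Finset.card_univ] at h2
        omega
      obtain ⟨k, hk⟩ := this
      simp only [Finset.mem_insert, Finset.mem_singleton, not_or] at hk
      obtain ⟨C, hC⟩ := transvection_bdd_one hl hij (Ne.symm hk.1) hk.2
      exact ⟨C, fun _ => hC⟩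
    · exact ⟨0, fun h => absurd h hij⟩
  choose f hf using h
  obtain ⟨M, hM⟩ := Finite.exists_le f
  exact ⟨max M 0, le_max_right _ _, fun i j hij b =>
    ((hf (i, j) hij b).trans (hM (i, j))).trans (le_max_left _ _)⟩

end QTLen

namespace QTLen
open Matrix Matrix.SpecialLinearGroup

section blocks

variable {R : Type*} [CommRing R]

/-- upper left block embedding with explicit entries -/
def b12 (a b c d : R) (h : a * d - b * c = 1) : SpecialLinearGroup (Fin 3) R :=
  ⟨!![a, b, 0; c, d, 0; 0, 0, 1], by rw [det_fin_three]; simp; linear_combination h⟩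

/-- block in rows 0, 2 -/
def b13 (a b c d : R) (h : a * d - b * c = 1) : SpecialLinearGroup (Fin 3) R :=
  ⟨!![a, 0, b; 0, 1, 0; c, 0, d], by rw [det_fin_three]; simp; linear_combination h⟩

/-- block in rows 1, 2 -/
def b23 (a b c d : R) (h : a * d - b * c = 1) : SpecialLinearGroup (Fin 3) R :=
  ⟨!![1, 0, 0; 0, a, b; 0, c, d], by rw [det_fin_three]; simp; linear_combination h⟩

/-- a Weyl element -/
def wA (R : Type*) [CommRing R] : SpecialLinearGroup (Fin 3) R :=
  ⟨!![1, 0, 0; 0, 0, -1; 0, 1, 0], by rw [det_fin_three]; simp⟩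

/-- another Weyl element -/
def wB (R : Type*) [CommRing R] : SpecialLinearGroup (Fin 3) R :=
  ⟨!![0, 0, 1; 0, -1, 0; 1, 0, 0], by rw [det_fin_three]; simp⟩

theorem b13_eq (a b c d : R) (h : a * d - b * c = 1) :
    b13 a b c d h = wA R * b12 a b c d h * (wA R)⁻¹ := by
  rw [eq_mul_inv_iff_mul_eq]
  apply Subtype.ext
  rw [Matrix.SpecialLinearGroup.coe_mul, Matrix.SpecialLinearGroup.coe_mul]
  simp [b13, b12, wA]

theorem b23_eq (a b c d : R) (h : a * d - b * c = 1) :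
    b23 d (-c) (-b) a (by linear_combination h) = wB R * b12 a b c d h * (wB R)⁻¹ := by
  rw [eq_mul_inv_iff_mul_eq]
  apply Subtype.ext
  rw [Matrix.SpecialLinearGroup.coe_mul, Matrix.SpecialLinearGroup.coe_mul]
  simp [b23, b12, wB]

theorem tv_coe {i j : Fin 3} (hij : i ≠ j) (t : R) :
    (transvection hij t).1 = 1 + single i j t := rfl

theorem e01 (t : R) : (transvection (show (0 : Fin 3) ≠ 1 by decide) t).1
    = !![1, t, 0; 0, 1, 0; 0, 0, 1] := by
  rw [tv_coe]; ext i j; fin_cases i <;> fin_cases j <;> simp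

theorem e10 (t : R) : (transvection (show (1 : Fin 3) ≠ 0 by decide) t).1
    = !![1, 0, 0; t, 1, 0; 0, 0, 1] := by
  rw [tv_coe]; ext i j; fin_cases i <;> fin_cases j <;> simp

theorem e02 (t : R) : (transvection (show (0 : Fin 3) ≠ 2 by decide) t).1
    = !![1, 0, t; 0, 1, 0; 0, 0, 1] := by
  rw [tv_coe]; ext i j; fin_cases i <;> fin_cases j <;> simp

theorem e12 (t : R) : (transvection (show (1 : Fin 3) ≠ 2 by decide) t).1
    = !![1, 0, 0; 0, 1, t; 0, 0, 1] := by
  rw [tv_coe]; ext i j; fin_cases i <;> fin_cases j <;> simp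

theorem e21 (t : R) : (transvection (show (2 : Fin 3) ≠ 1 by decide) t).1
    = !![1, 0, 0; 0, 1, 0; 0, t, 1] := by
  rw [tv_coe]; ext i j; fin_cases i <;> fin_cases j <;> simp

theorem mul_id (p q1 q2 r s : R) (h : p * s - q1 * q2 * r = 1) :
    b12 p (q1 * q2) r s h = b23 s (-(q1 * r)) (-q2) p (by linear_combination h)
      * transvection (show (1 : Fin 3) ≠ 0 by decide) r
      * b13 p q1 (q2 * r) s (by linear_combination h)
      * transvection (show (2 : Fin 3) ≠ 1 by decide) q2
      * transvection (show (1 : Fin 3) ≠ 2 by decide) (q1 * r)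
      * transvection (show (0 : Fin 3) ≠ 2 by decide) (-(q1 * s)) := by
  apply Subtype.ext
  simp only [Matrix.SpecialLinearGroup.coe_mul, e10, e21, e12, e02]
  simp only [b12, b23, b13]
  ext i j
  fin_cases i <;> fin_cases j <;> simp [Matrix.mul_apply, Fin.sum_univ_three] <;>
    grind

/-- upper left embedding of `SL₂` into `SL₃` -/
def emb : SpecialLinearGroup (Fin 2) R →* SpecialLinearGroup (Fin 3) R where
  toFun M := b12 (M.1 0 0) (M.1 0 1) (M.1 1 0) (M.1 1 1) (by rw [← det_fin_two]; exact M.2)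
  map_one' := by
    apply Subtype.ext
    simp only [b12, Matrix.SpecialLinearGroup.coe_one]
    ext i j
    fin_cases i <;> fin_cases j <;> simp
  map_mul' M N := by
    apply Subtype.ext
    simp only [Matrix.SpecialLinearGroup.coe_mul]
    simp only [b12]
    ext i j
    fin_cases i <;> fin_cases j <;> simp [Matrix.mul_apply, Fin.sum_univ_three, Fin.sum_univ_two]

theorem b12_eq_emb (a b c d : R) (h : a * d - b * c = 1) :
    b12 a b c d h = emb ⟨!![a, b; c, d], by rw [det_fin_two]; simpa using h⟩ := rfl

/-- uniform bound for all completions of a top row -/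
def Bd (l : SpecialLinearGroup (Fin 3) R → ℝ) (p q : R) (K : ℝ) : Prop :=
  ∀ r s (h : p * s - q * r = 1), l (b12 p q r s h) ≤ K

/-- the standing assumptions on `l` -/
structure Ctx (l : SpecialLinearGroup (Fin 3) R → ℝ) (C : ℝ) : Prop where
  hl : QTLen l
  nn : 0 ≤ C
  tv : ∀ (i j : Fin 3) (hij : i ≠ j) (b : R), l (transvection hij b) ≤ C
  hA : l (wA R) ≤ C
  hB : l (wB R) ≤ C

theorem exists_ctx [Module.Finite ℤ R] {l : SpecialLinearGroup (Fin 3) R → ℝ} (hl : QTLen l) :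
    ∃ C, Ctx l C := by
  obtain ⟨C, h0, hC⟩ := transvection_bdd hl (by simp)
  refine ⟨C + l (wA R) + l (wB R), hl, ?_, ?_, ?_, ?_⟩
  all_goals
    have h1 := hl.nonneg (wA R)
    have h2 := hl.nonneg (wB R)
  · linarith
  · intro i j hij b
    have := hC i j hij b
    linarith
  · linarith
  · linarith

namespace Ctx

variable {l : SpecialLinearGroup (Fin 3) R → ℝ} {C : ℝ}

theorem b13_le (H : Ctx l C) {a b c d : R} (h : a * d - b * c = 1) :
    l (b13 a b c d h) ≤ l (b12 a b c d h) + 2 * C := by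
  rw [b13_eq]
  have h1 := H.hl.mul_le (wA R * b12 a b c d h) (wA R)⁻¹
  have h2 := H.hl.mul_le (wA R) (b12 a b c d h)
  rw [H.hl.inv] at h1
  have := H.hA
  linarith

theorem b23_le (H : Ctx l C) {a b c d : R} (h : a * d - b * c = 1) :
    l (b23 d (-c) (-b) a (by linear_combination h)) ≤ l (b12 a b c d h) + 2 * C := by
  rw [b23_eq a b c d h]
  have h1 := H.hl.mul_le (wB R * b12 a b c d h) (wB R)⁻¹
  have h2 := H.hl.mul_le (wB R) (b12 a b c d h)
  rw [H.hl.inv] at h1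
  have := H.hB
  linarith

theorem bd_one (H : Ctx l C) (q : R) : Bd l 1 q (2 * C) := by
  intro r s h
  have e : b12 1 q r s h = transvection (show (1 : Fin 3) ≠ 0 by decide) r *
      transvection (show (0 : Fin 3) ≠ 1 by decide) q := by
    apply Subtype.ext
    simp only [Matrix.SpecialLinearGroup.coe_mul, e10, e01, b12]
    ext i j
    fin_cases i <;> fin_cases j <;> simp [Matrix.mul_apply, Fin.sum_univ_three] <;> grind
  rw [e]
  have h1 := H.hl.mul_le (transvection (show (1 : Fin 3) ≠ 0 by decide) r)
    (transvection (show (0 : Fin 3) ≠ 1 by decide) q)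
  have h2 := H.tv 1 0 (by decide) r
  have h3 := H.tv 0 1 (by decide) q
  linarith

theorem bd_left (H : Ctx l C) {p q : R} {K : ℝ} (h : Bd l p q K) (t : R) :
    Bd l (p + t * q) q (K + C) := by
  intro r s hd
  have e : b12 (p + t * q) q r s hd = b12 p q (r - t * s) s (by linear_combination hd) *
      transvection (show (1 : Fin 3) ≠ 0 by decide) t := by
    apply Subtype.ext
    simp only [Matrix.SpecialLinearGroup.coe_mul, e10]
    simp only [b12]
    ext i j
    fin_cases i <;> fin_cases j <;> simp [Matrix.mul_apply, Fin.sum_univ_three] <;> grind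
  rw [e]
  have h1 := H.hl.mul_le (b12 p q (r - t * s) s (by linear_combination hd))
    (transvection (show (1 : Fin 3) ≠ 0 by decide) t)
  have h2 := H.tv 1 0 (by decide) t
  have h3 := h (r - t * s) s (by linear_combination hd)
  linarith

theorem bd_right (H : Ctx l C) {p q : R} {K : ℝ} (h : Bd l p q K) (t : R) :
    Bd l p (q + t * p) (K + C) := by
  intro r s hd
  have e : b12 p (q + t * p) r s hd = b12 p q r (s - t * r) (by linear_combination hd) *
      transvection (show (0 : Fin 3) ≠ 1 by decide) t := by
    apply Subtype.ext
    simp only [Matrix.SpecialLinearGroup.coe_mul, e01]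
    simp only [b12]
    ext i j
    fin_cases i <;> fin_cases j <;> simp [Matrix.mul_apply, Fin.sum_univ_three] <;> grind
  rw [e]
  have h1 := H.hl.mul_le (b12 p q r (s - t * r) (by linear_combination hd))
    (transvection (show (0 : Fin 3) ≠ 1 by decide) t)
  have h2 := H.tv 0 1 (by decide) t
  have h3 := h r (s - t * r) (by linear_combination hd)
  linarith

theorem bd_unit (H : Ctx l C) {u v : R} (huv : u * v = 1) (t q : R) :
    Bd l (u + t * q) q (5 * C) := by
  have h1 := H.bd_left (H.bd_one 1) (u - 1)
  have h2 := H.bd_right h1 (v * (q - 1))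
  have e1 : 1 + (u - 1) * 1 = u := by ring
  rw [e1] at h2
  have e2 : 1 + v * (q - 1) * u = q := by linear_combination (q - 1) * huv
  rw [e2] at h2
  have h3 := H.bd_left h2 t
  intro r s h
  exact (h3 r s h).trans (by linarith)

theorem bd_mul (H : Ctx l C) {p q1 q2 : R} {K1 K2 : ℝ} (h1 : Bd l p q1 K1) (h2 : Bd l p q2 K2) :
    Bd l p (q1 * q2) (K1 + K2 + 8 * C) := by
  intro r s h
  rw [mul_id]
  refine (H.hl.mul_le _ _).trans ?_
  have a1 := H.tv 0 2 (by decide) (-(q1 * s))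
  refine (add_le_add (H.hl.mul_le _ _) a1).trans ?_
  have a2 := H.tv 1 2 (by decide) (q1 * r)
  refine (add_le_add (add_le_add (H.hl.mul_le _ _) a2) le_rfl).trans ?_
  have a3 := H.tv 2 1 (by decide) q2
  refine (add_le_add (add_le_add (add_le_add (H.hl.mul_le _ _) a3) le_rfl) le_rfl).trans ?_
  have a4 := (H.b13_le (a := p) (b := q1) (c := q2 * r) (d := s) (by linear_combination h))
  have a5 := h1 (q2 * r) s (by linear_combination h)
  refine (add_le_add (add_le_add (add_le_add (add_le_add (H.hl.mul_le _ _) a4) le_rfl) le_rfl)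
    le_rfl).trans ?_
  have a6 := (H.b23_le (a := p) (b := q2) (c := q1 * r) (d := s) (by linear_combination h))
  have a7 := h2 (q1 * r) s (by linear_combination h)
  have a8 := H.tv 1 0 (by decide) r
  linarith

theorem pow_form (M : SpecialLinearGroup (Fin 2) R) (m : ℕ) : ∃ x y : R,
    x * x + (M.1 0 0 + M.1 1 1) * x * y + y * y = 1 ∧
    (M ^ m).1 = !![x + y * M.1 0 0, y * M.1 0 1; y * M.1 1 0, x + y * M.1 1 1] := by
  have hdet : M.1 0 0 * M.1 1 1 - M.1 0 1 * M.1 1 0 = 1 := by rw [← det_fin_two]; exact M.2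
  induction m with
  | zero =>
    refine ⟨1, 0, by ring, ?_⟩
    rw [pow_zero]
    ext i j
    fin_cases i <;> fin_cases j <;> simp
  | succ m ih =>
    obtain ⟨x, y, h1, h2⟩ := ih
    refine ⟨-y, x + (M.1 0 0 + M.1 1 1) * y, by linear_combination h1, ?_⟩
    rw [pow_succ, Matrix.SpecialLinearGroup.coe_mul, h2]
    ext i j
    fin_cases i <;> fin_cases j <;> simp [Matrix.mul_apply, Fin.sum_univ_two] <;> grind

theorem emb_pow_le (H : Ctx l C) (M : SpecialLinearGroup (Fin 2) R) (m : ℕ)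
    (hu : ∃ u v t : R, u * v = 1 ∧ (M ^ (2 * m)).1 0 0 = u + t * M.1 0 1) :
    l (emb (M ^ (2 * m))) ≤ 32 * C := by
  obtain ⟨x, y, h1, h2⟩ := pow_form M m
  have hdet : M.1 0 0 * M.1 1 1 - M.1 0 1 * M.1 1 0 = 1 := by rw [← det_fin_two]; exact M.2
  have e00 : (M ^ (2 * m)).1 0 0 = (x * x - y * y) +
      M.1 0 0 * (y * (2 * x + (M.1 0 0 + M.1 1 1) * y)) := by
    rw [two_mul, pow_add, Matrix.SpecialLinearGroup.coe_mul, h2]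
    simp [Matrix.mul_apply, Fin.sum_univ_two]
    grind
  have e01 : (M ^ (2 * m)).1 0 1 = (y * (2 * x + (M.1 0 0 + M.1 1 1) * y)) * M.1 0 1 := by
    rw [two_mul, pow_add, Matrix.SpecialLinearGroup.coe_mul, h2]
    simp [Matrix.mul_apply, Fin.sum_univ_two]
    grind
  obtain ⟨u, v, t, huv, hut⟩ := hu
  have b1 := H.bd_unit (u := (1 : R)) (v := 1) (by ring)
    (-((M.1 0 0 + M.1 1 1) * x) - 2 * y) y
  have b2 := H.bd_unit (u := (-1 : R)) (v := -1) (by ring) x (2 * x + (M.1 0 0 + M.1 1 1) * y)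
  have c1 : 1 + (-((M.1 0 0 + M.1 1 1) * x) - 2 * y) * y = x * x - y * y := by
    linear_combination -h1
  have c2 : -1 + x * (2 * x + (M.1 0 0 + M.1 1 1) * y) = x * x - y * y := by
    linear_combination h1
  rw [c1] at b1
  rw [c2] at b2
  have b3 := H.bd_left (H.bd_mul b1 b2) (M.1 0 0)
  rw [← e00] at b3
  have b4 := H.bd_unit huv t (M.1 0 1)
  rw [← hut] at b4
  have b5 := H.bd_mul b3 b4
  rw [← e01] at b5
  refine (b5 _ _ ?_).trans (by linarith)
  rw [← det_fin_two]; exact (M ^ (2 * m)).2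

theorem emb_NL (H : Ctx l C) (hfin : ∀ b : R, b ≠ 0 → Finite (R ⧸ Ideal.span {b}))
    (M : SpecialLinearGroup (Fin 2) R) : NL (fun M => l (emb M)) M := by
  have key : ∃ m : ℕ, 1 ≤ m ∧ ∀ k, l (emb (M ^ (2 * (m * k)))) ≤ 32 * C := by
    by_cases hb : M.1 0 1 = 0
    · refine ⟨1, le_rfl, fun k => H.emb_pow_le M _ ?_⟩
      obtain ⟨x, y, h1, h2⟩ := pow_form M (2 * (1 * k))
      have hd := (M ^ (2 * (1 * k))).2
      rw [det_fin_two, h2, hb] at hd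
      simp only [of_apply, cons_val', cons_val_zero, cons_val_one, cons_val_fin_one] at hd
      refine ⟨x + y * M.1 0 0, x + y * M.1 1 1, 0, by linear_combination hd, ?_⟩
      rw [h2]; simp
    · have := hfin _ hb
      let φ := SpecialLinearGroup.map (n := Fin 2) (Ideal.Quotient.mk (Ideal.span {M.1 0 1}))
      have : Finite (SpecialLinearGroup (Fin 2) (R ⧸ Ideal.span {M.1 0 1})) :=
        Subtype.finite
      refine ⟨orderOf (φ M), orderOf_pos _, fun k => H.emb_pow_le M _ ?_⟩
      have h1 : φ (M ^ (2 * (orderOf (φ M) * k))) = 1 := by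
        rw [map_pow, mul_comm, mul_assoc, pow_mul, pow_orderOf_eq_one, one_pow]
      have h2 : Ideal.Quotient.mk (Ideal.span {M.1 0 1})
          ((M ^ (2 * (orderOf (φ M) * k))).1 0 0) = 1 := by
        have := congrArg (fun A => A.1 0 0) h1
        exact this.trans (by simp)
      rw [← map_one (Ideal.Quotient.mk (Ideal.span {M.1 0 1})), Ideal.Quotient.eq,
        Ideal.mem_span_singleton'] at h2
      obtain ⟨t, ht⟩ := h2
      exact ⟨1, 1, t, by ring, by linear_combination -ht⟩
  obtain ⟨m, hm, hk⟩ := key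
  intro ε hε
  obtain ⟨k, hk'⟩ := exists_nat_gt (32 * C / ε)
  rw [div_lt_iff₀ hε] at hk'
  have hC := H.nn
  have hk0 : (0 : ℝ) < k := by
    by_contra hcon
    have : (k : ℝ) * ε ≤ 0 := mul_nonpos_of_nonpos_of_nonneg (by linarith) hε.le
    linarith
  have hk1 : 0 < k := by exact_mod_cast hk0
  refine ⟨2 * (m * k), ?_, (hk k).trans_lt (hk'.trans_le ?_)⟩
  · have := Nat.mul_pos hm hk1
    omega
  · have : k ≤ 2 * (m * k) := by nlinarith
    have h : (k : ℝ) ≤ (2 * (m * k) : ℕ) := by exact_mod_cast this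
    rw [mul_comm]
    exact mul_le_mul_of_nonneg_left h hε.le

theorem diag_le (H : Ctx l C) {u v : R} (huv : u * v = 1) :
    l (b13 u 0 0 v (by simpa using huv)) ≤ 7 * C := by
  have h1 := H.bd_unit huv 0 0
  simp only [mul_zero, add_zero] at h1
  have h2 := h1 0 v (by simpa using huv)
  have h3 := H.b13_le (a := u) (b := 0) (c := 0) (d := v) (by simpa using huv)
  linarith

end Ctx

end blocks

end QTLen

namespace QTFG

theorem fg_of_graph {Γ Y A : Type*} [Group Γ] [MulAction Γ Y] [Finite A] (Vs : Set Y) (y0 : Y)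
    (hy0 : y0 ∈ Vs) (hinv : ∀ (γ : Γ) y, y ∈ Vs → γ • y ∈ Vs)
    (Ω : Set Y) (hΩf : Ω.Finite)
    (hΩ : ∀ y ∈ Vs, ∃ γ : Γ, ∃ ω ∈ Ω, y = γ • ω)
    (hfree : ∀ y ∈ Vs, ∀ γ γ' : Γ, γ • y = γ' • y → γ = γ')
    (r : A → Y → Y → Prop)
    (hr1 : ∀ a (γ : Γ) y y', r a y y' → r a (γ • y) (γ • y'))
    (hr2 : ∀ a y y' y'', r a y y' → r a y y'' → y' = y'')
    (hconn : ∀ y ∈ Vs, Relation.EqvGen (fun y y' => y ∈ Vs ∧ y' ∈ Vs ∧ ∃ a, r a y y') y0 y) :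
    Group.FG Γ := by
  classical
  -- adjoin the base point to the representatives
  set Ω' := insert y0 (Ω ∩ Vs) with hΩ'
  have hf' : Ω'.Finite := (hΩf.subset Set.inter_subset_left).insert _
  have hsub : Ω' ⊆ Vs := by
    rintro y (rfl | ⟨_, h⟩)
    · exact hy0
    · exact h
  have hrep : ∀ y ∈ Vs, ∃ γ : Γ, ∃ ω ∈ Ω', y = γ • ω := by
    intro y hy
    obtain ⟨γ, ω, hω, rfl⟩ := hΩ y hy
    refine ⟨γ, ω, Or.inr ⟨hω, ?_⟩, rfl⟩
    have := hinv γ⁻¹ _ hy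
    simpa using this
  -- relations including equality
  let r' : Option A → Y → Y → Prop := fun o y y' => o.elim (y = y') (fun a => r a y y')
  have hr1' : ∀ a (γ : Γ) y y', r' a y y' → r' a (γ • y) (γ • y') := by
    intro a γ y y' h
    cases a with
    | none => exact congrArg (γ • ·) h
    | some a => exact hr1 a γ y y' h
  have hr2' : ∀ a y y' y'', r' a y y' → r' a y y'' → y' = y'' := by
    intro a y y' y'' h h'
    cases a with
    | none => exact h.symm.trans h'
    | some a => exact hr2 a y y' y'' h h'
  let F : Set Γ := ⋃ ω ∈ Ω', ⋃ ω' ∈ Ω', ⋃ a : Option A, {γ | r' a ω (γ • ω')}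
  have hF : F.Finite := by
    refine hf'.biUnion fun ω _ => hf'.biUnion fun ω' hω' => Set.finite_iUnion fun a => ?_
    apply Set.Subsingleton.finite
    intro γ h γ' h'
    exact hfree ω' (hsub hω') _ _ (hr2' a _ _ _ h h')
  have memF : ∀ ω ∈ Ω', ∀ ω' ∈ Ω', ∀ a γ, r' a ω (γ • ω') → γ ∈ F := by
    intro ω h ω' h' a γ hγ
    simp only [F, Set.mem_iUnion]
    exact ⟨ω, h, ω', h', a, hγ⟩
  let G := Subgroup.closure F
  let P : Y → Prop := fun y => ∃ γ ∈ G, ∃ ω ∈ Ω', y = γ • ω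
  have step : ∀ y y', y ∈ Vs ∧ y' ∈ Vs ∧ (∃ a, r a y y') → (P y ↔ P y') := by
    rintro y y' ⟨hy, hy', a, ha⟩
    constructor
    · rintro ⟨γ, hγ, ω, hω, rfl⟩
      obtain ⟨γ', ω', hω', rfl⟩ := hrep y' hy'
      refine ⟨γ', ?_, ω', hω', rfl⟩
      have h1 := hr1' (some a) γ⁻¹ _ _ ha
      rw [inv_smul_smul, ← mul_smul] at h1
      have h2 := Subgroup.subset_closure (memF ω hω ω' hω' _ _ h1)
      have h3 := G.mul_mem hγ h2
      simpa using h3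
    · rintro ⟨γ', hγ', ω', hω', rfl⟩
      obtain ⟨γ, ω, hω, rfl⟩ := hrep y hy
      refine ⟨γ, ?_, ω, hω, rfl⟩
      have h1 := hr1' (some a) γ⁻¹ _ _ ha
      rw [inv_smul_smul, ← mul_smul] at h1
      have h2 := Subgroup.subset_closure (memF ω hω ω' hω' _ _ h1)
      have h3 := G.mul_mem hγ' (G.inv_mem h2)
      simpa using h3
  have stepE : ∀ y y', Relation.EqvGen (fun y y' => y ∈ Vs ∧ y' ∈ Vs ∧ ∃ a, r a y y') y y' →
      (P y ↔ P y') := by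
    intro y y' h
    induction h with
    | rel _ _ h => exact step _ _ h
    | refl _ => exact Iff.rfl
    | symm _ _ _ ih => exact ih.symm
    | trans _ _ _ _ _ ih1 ih2 => exact ih1.trans ih2
  have h0 : P y0 := ⟨1, G.one_mem, y0, Set.mem_insert _ _, (one_smul _ _).symm⟩
  have hall : ∀ y ∈ Vs, P y := fun y hy => (stepE _ _ (hconn y hy)).1 h0
  refine ⟨⟨hF.toFinset, ?_⟩⟩
  rw [hF.coe_toFinset, eq_top_iff]
  intro g _
  obtain ⟨γ, hγ, ω, hω, h⟩ := hall (g • y0) (hinv g _ hy0)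
  have h1 : γ⁻¹ * g ∈ F := by
    refine memF ω hω y0 (Set.mem_insert _ _) none _ ?_
    change ω = (γ⁻¹ * g) • y0
    rw [mul_smul, h, inv_smul_smul]
  have := G.mul_mem hγ (Subgroup.subset_closure h1)
  simpa using this

/-- finitely many representatives for the fibres of a map to a finite type -/
theorem exists_reps {α β : Type*} [Finite β] (S : Set α) (f : α → β) :
    ∃ P : Finset α, (∀ p ∈ P, p ∈ S) ∧ ∀ p ∈ S, ∃ p0 ∈ P, f p = f p0 := by
  classical
  rcases S.eq_empty_or_nonempty with rfl | ⟨s0, _⟩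
  · exact ⟨∅, by simp, by simp⟩
  have hne : Nonempty α := ⟨s0⟩
  have hfin : (f '' S).Finite := Set.toFinite _
  choose! g hg using fun (b : β) (hb : b ∈ f '' S) => hb
  refine ⟨hfin.toFinset.image g, ?_, ?_⟩
  · intro p hp
    obtain ⟨b, hb, rfl⟩ := Finset.mem_image.1 hp
    exact (hg b (by simpa using hb)).1
  · intro p hp
    have hb : f p ∈ f '' S := ⟨p, hp, rfl⟩
    exact ⟨g (f p), Finset.mem_image.2 ⟨f p, by simpa using hb, rfl⟩, (hg _ hb).2.symm⟩

/-- the arithmetic input -/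
structure Arith (R : Type*) [CommRing R] (ν : R → ℕ) (R0 : Finset R) : Prop where
  hfin : ∀ b : R, b ≠ 0 → Finite (R ⧸ Ideal.span {b})
  zero_iff : ∀ b, ν b = 0 ↔ b = 0
  mul : ∀ a b, ν (a * b) = ν a * ν b
  dvd : ∀ b, b ∣ (ν b : R)
  r0 : ∀ r ∈ R0, r ≠ 0
  approx : ∀ a b, b ≠ 0 → ∃ r ∈ R0, ∃ q, ν (r * a - q * b) < ν b

open NumberField in
theorem exists_arith (K : Type*) [Field K] [NumberField K] :
    ∃ R0 : Finset (𝓞 K), Arith (𝓞 K) (fun b => (Algebra.norm ℤ b).natAbs) R0 := by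
  classical
  let bS := Module.Free.chooseBasis ℤ (𝓞 K)
  let F := ClassGroup.finsetApprox bS AbsoluteValue.absIsAdmissible
  refine ⟨F.image (algebraMap ℤ (𝓞 K)), ?_, ?_, ?_, ?_, ?_, ?_⟩
  · intro b hb
    exact Ideal.finiteQuotientOfFreeOfNeBot _ (by simpa using hb)
  · intro b
    rw [Int.natAbs_eq_zero, Algebra.norm_eq_zero_iff]
  · intro a b
    rw [map_mul, Int.natAbs_mul]
  · intro b
    have := Ideal.absNorm_mem (Ideal.span {b})
    rwa [Ideal.absNorm_span_singleton, Ideal.mem_span_singleton] at this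
  · intro r hr
    obtain ⟨z, hz, rfl⟩ := Finset.mem_image.1 hr
    intro h0
    have : z = 0 := by simpa using h0
    rw [this] at hz
    exact ClassGroup.finsetApprox.zero_notMem _ _ hz
  · intro a b hb
    obtain ⟨q, r, hr, h⟩ := ClassGroup.exists_mem_finset_approx' bS
      AbsoluteValue.absIsAdmissible a hb
    refine ⟨algebraMap ℤ _ r, Finset.mem_image_of_mem _ hr, q, ?_⟩
    rw [Algebra.smul_def] at h
    simp only [AbsoluteValue.abs_apply] at h
    zify
    exact h

open NumberField in
theorem units_fg (K : Type*) [Field K] [NumberField K] : Group.FG (𝓞 K)ˣ :=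
  Group.fg_iff_monoid_fg.2 inferInstance

end QTFG

namespace QTFG
open Matrix

/-- two by two matrices with named entries -/
@[ext] structure Mat (R : Type*) where
  a : R
  b : R
  c : R
  d : R

namespace Mat
variable {R : Type*} [CommRing R]

/-- the determinant -/
def Dt (W : Mat R) : R := W.a * W.d - W.b * W.c

instance : MulAction (Matrix.SpecialLinearGroup (Fin 2) R) (Mat R) where
  smul γ W := ⟨γ.1 0 0 * W.a + γ.1 0 1 * W.c, γ.1 0 0 * W.b + γ.1 0 1 * W.d,
    γ.1 1 0 * W.a + γ.1 1 1 * W.c, γ.1 1 0 * W.b + γ.1 1 1 * W.d⟩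
  one_smul W := by
    change (⟨_, _, _, _⟩ : Mat R) = _
    ext <;> simp
  mul_smul γ γ' W := by
    change (⟨_, _, _, _⟩ : Mat R) = ⟨_, _, _, _⟩
    simp only [Matrix.SpecialLinearGroup.coe_mul, Matrix.mul_apply, Fin.sum_univ_two]
    ext
    · change _ = _ * (_ * _ + _ * _) + _ * (_ * _ + _ * _); ring
    · change _ = _ * (_ * _ + _ * _) + _ * (_ * _ + _ * _); ring
    · change _ = _ * (_ * _ + _ * _) + _ * (_ * _ + _ * _); ring
    · change _ = _ * (_ * _ + _ * _) + _ * (_ * _ + _ * _); ring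

theorem smul_def (γ : Matrix.SpecialLinearGroup (Fin 2) R) (W : Mat R) :
    γ • W = ⟨γ.1 0 0 * W.a + γ.1 0 1 * W.c, γ.1 0 0 * W.b + γ.1 0 1 * W.d,
    γ.1 1 0 * W.a + γ.1 1 1 * W.c, γ.1 1 0 * W.b + γ.1 1 1 * W.d⟩ := rfl

theorem Dt_smul (γ : Matrix.SpecialLinearGroup (Fin 2) R) (W : Mat R) : (γ • W).Dt = W.Dt := by
  have hdet : γ.1 0 0 * γ.1 1 1 - γ.1 0 1 * γ.1 1 0 = 1 := by rw [← det_fin_two]; exact γ.2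
  rw [smul_def]
  simp only [Dt]
  linear_combination (W.a * W.d - W.b * W.c) * hdet

/-- right multiplication by an upper triangular or general matrix -/
def rm (W A : Mat R) : Mat R :=
  ⟨W.a * A.a + W.b * A.c, W.a * A.b + W.b * A.d, W.c * A.a + W.d * A.c, W.c * A.b + W.d * A.d⟩

/-- the moves -/
def mv (i : R × Mat R) (W W' : Mat R) : Prop :=
  i.1 ≠ 0 ∧ i.1 * W'.a = (W.rm i.2).a ∧ i.1 * W'.b = (W.rm i.2).b ∧ i.1 * W'.c = (W.rm i.2).c ∧
    i.1 * W'.d = (W.rm i.2).d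

theorem mv_smul (i : R × Mat R) (γ : Matrix.SpecialLinearGroup (Fin 2) R) (W W' : Mat R)
    (h : mv i W W') : mv i (γ • W) (γ • W') := by
  obtain ⟨h0, h1, h2, h3, h4⟩ := h
  simp only [rm] at h1 h2 h3 h4
  rw [smul_def, smul_def]
  refine ⟨h0, ?_, ?_, ?_, ?_⟩ <;> simp only [rm]
  · linear_combination γ.1 0 0 * h1 + γ.1 0 1 * h3
  · linear_combination γ.1 0 0 * h2 + γ.1 0 1 * h4
  · linear_combination γ.1 1 0 * h1 + γ.1 1 1 * h3
  · linear_combination γ.1 1 0 * h2 + γ.1 1 1 * h4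

theorem mv_func [IsDomain R] (i : R × Mat R) (W W' W'' : Mat R)
    (h : mv i W W') (h' : mv i W W'') : W' = W'' := by
  obtain ⟨h0, h1, h2, h3, h4⟩ := h
  obtain ⟨_, h1', h2', h3', h4'⟩ := h'
  ext
  · exact mul_left_cancel₀ h0 (h1.trans h1'.symm)
  · exact mul_left_cancel₀ h0 (h2.trans h2'.symm)
  · exact mul_left_cancel₀ h0 (h3.trans h3'.symm)
  · exact mul_left_cancel₀ h0 (h4.trans h4'.symm)

theorem smul_free [IsDomain R] (W : Mat R) (hW : W.Dt ≠ 0)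
    (γ γ' : Matrix.SpecialLinearGroup (Fin 2) R) (h : γ • W = γ' • W) : γ = γ' := by
  rw [smul_def, smul_def] at h
  simp only [mk.injEq] at h
  obtain ⟨h1, h2, h3, h4⟩ := h
  ext i j
  fin_cases i <;> fin_cases j <;> apply mul_left_cancel₀ hW <;> simp only [Dt] <;>
    simp only [Fin.zero_eta, Fin.mk_one]
  · linear_combination W.d * h1 - W.c * h2
  · linear_combination W.a * h2 - W.b * h1
  · linear_combination W.d * h3 - W.c * h4
  · linear_combination W.a * h4 - W.b * h3

/-- connectedness by moves inside the set of matrices with determinant in `D` -/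
def Cn (D : Finset R) (A : Set (R × Mat R)) (W W' : Mat R) : Prop :=
  Relation.EqvGen (fun W W' => W.Dt ∈ D ∧ W'.Dt ∈ D ∧ ∃ i ∈ A, mv i W W') W W'

variable {D : Finset R} {A : Set (R × Mat R)}

theorem Cn.refl (W : Mat R) : Cn D A W W := Relation.EqvGen.refl _
theorem Cn.symm {W W' : Mat R} (h : Cn D A W W') : Cn D A W' W := Relation.EqvGen.symm _ _ h
theorem Cn.trans {W W' W'' : Mat R} (h : Cn D A W W') (h' : Cn D A W' W'') : Cn D A W W'' :=
  Relation.EqvGen.trans _ _ _ h h'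
theorem Cn.of {W W' : Mat R} (h : W.Dt ∈ D) (h' : W'.Dt ∈ D) (i) (hi : i ∈ A) (hm : mv i W W') :
    Cn D A W W' := Relation.EqvGen.rel _ _ ⟨h, h', i, hi, hm⟩

/-- diagonal move -/
def dg (u : Rˣ) : Mat R := ⟨u, 0, 0, (u⁻¹ : Rˣ)⟩
/-- unipotent move -/
def un (t : R) : Mat R := ⟨1, t, 0, 1⟩

theorem Dt_dg (W : Mat R) (u : Rˣ) : (W.rm (dg u)).Dt = W.Dt := by
  simp only [Dt, rm, dg]
  have := u.mul_inv
  linear_combination (W.a * W.d - W.b * W.c) * this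

theorem Dt_un (W : Mat R) (t : R) : (W.rm (un t)).Dt = W.Dt := by
  simp only [Dt, rm, un]
  ring

theorem rm_dg_mul (W : Mat R) (u v : Rˣ) : W.rm (dg (u * v)) = (W.rm (dg u)).rm (dg v) := by
  ext <;> simp [rm, dg] <;> ring

theorem rm_dg_one (W : Mat R) : W.rm (dg 1) = W := by
  ext <;> simp [rm, dg]

theorem rm_un_add (W : Mat R) (u v : R) : W.rm (un (u + v)) = (W.rm (un u)).rm (un v) := by
  ext <;> simp [rm, un] <;> ring

theorem rm_un_zero (W : Mat R) : W.rm (un 0) = W := by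
  ext <;> simp [rm, un]

theorem cn_dg [Nontrivial R] {S : Set Rˣ} (hS : Subgroup.closure S = ⊤)
    (hA : ∀ u ∈ S, ((1 : R), dg u) ∈ A) (W : Mat R) (hW : W.Dt ∈ D) (u : Rˣ) :
    Cn D A W (W.rm (dg u)) := by
  have hu : u ∈ Subgroup.closure S := by rw [hS]; trivial
  induction hu using Subgroup.closure_induction generalizing W with
  | mem u hu =>
    refine Cn.of hW (by rwa [Dt_dg]) _ (hA u hu) ⟨one_ne_zero, ?_, ?_, ?_, ?_⟩ <;> simp
  | one => rw [rm_dg_one]; exact Cn.refl _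
  | mul u v _ _ hu hv =>
    rw [rm_dg_mul]
    exact (hu W hW).trans (hv _ (by rwa [Dt_dg]))
  | inv u _ hu =>
    have := hu (W.rm (dg u⁻¹)) (by rwa [Dt_dg])
    rw [← rm_dg_mul, inv_mul_cancel, rm_dg_one] at this
    exact this.symm

theorem cn_un [Nontrivial R] {S : Set R} (hS : AddSubgroup.closure S = ⊤)
    (hA : ∀ u ∈ S, ((1 : R), un u) ∈ A) (W : Mat R) (hW : W.Dt ∈ D) (u : R) :
    Cn D A W (W.rm (un u)) := by
  have hu : u ∈ AddSubgroup.closure S := by rw [hS]; trivial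
  induction hu using AddSubgroup.closure_induction generalizing W with
  | mem u hu =>
    refine Cn.of hW (by rwa [Dt_un]) _ (hA u hu) ⟨one_ne_zero, ?_, ?_, ?_, ?_⟩ <;> simp
  | zero => rw [rm_un_zero]; exact Cn.refl _
  | add u v _ _ hu hv =>
    rw [rm_un_add]
    exact (hu W hW).trans (hv _ (by rwa [Dt_un]))
  | neg u _ hu =>
    have := hu (W.rm (un (-u))) (by rwa [Dt_un])
    rw [← rm_un_add, neg_add_cancel, rm_un_zero] at this
    exact this.symm

end Mat

section arith
variable {R : Type*} [CommRing R] {ν : R → ℕ} {R0 : Finset R}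

/-- representatives modulo `s` -/
theorem exists_mod (hA : Arith R ν R0) (s : R) (hs : s ≠ 0) :
    ∃ P : Finset R, ∀ t : R, ∃ y, ∃ p ∈ P, t = s * y + p := by
  have := hA.hfin s hs
  obtain ⟨P, -, h⟩ := exists_reps Set.univ (Ideal.Quotient.mk (Ideal.span {s}))
  refine ⟨P, fun t => ?_⟩
  obtain ⟨p, hp, h⟩ := h t trivial
  rw [Ideal.Quotient.eq, Ideal.mem_span_singleton'] at h
  obtain ⟨y, hy⟩ := h
  exact ⟨y, p, hp, by linear_combination -hy⟩

/-- divisors up to units -/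
theorem exists_div [IsDomain R] (hA : Arith R ν R0) (m : R) (hm : m ≠ 0) :
    ∃ P : Finset R, (∀ p ∈ P, p ≠ 0) ∧ ∀ p, p ∣ m → ∃ u : Rˣ, ∃ p0 ∈ P, p = u * p0 := by
  have := hA.hfin m hm
  obtain ⟨P, hP, h⟩ := exists_reps {p | p ∣ m} (Ideal.Quotient.mk (Ideal.span {m}))
  refine ⟨P, fun p hp h0 => hm (by simpa [h0] using hP p hp), fun p hp => ?_⟩
  obtain ⟨p0, hp0, h⟩ := h p hp
  rw [Ideal.Quotient.eq, Ideal.mem_span_singleton'] at h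
  obtain ⟨y, hy⟩ := h
  have hd := hP p0 hp0
  have h1 : p ∣ p0 := by
    have : p0 = p - y * m := by linear_combination hy
    rw [this]
    exact dvd_sub dvd_rfl (hp.mul_left _)
  have h2 : p0 ∣ p := by
    have : p = p0 + y * m := by linear_combination -hy
    rw [this]
    exact dvd_add dvd_rfl (Dvd.dvd.mul_left hd _)
  obtain ⟨u, hu⟩ := associated_of_dvd_dvd h2 h1
  exact ⟨u, p0, hp0, by rw [← hu, mul_comm]⟩

end arith

end QTFG

namespace QTFG
open Matrix Mat

variable {R : Type*} [CommRing R] [IsDomain R] {ν : R → ℕ} {R0 : Finset R}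

theorem same_line (hA : Arith R ν R0) (D : Finset R) (hD : ∀ d ∈ D, d ≠ 0) :
    ∃ T : Set (R × Mat R), T.Finite ∧ ∀ A : Set (R × Mat R), T ⊆ A →
      (∀ W : Mat R, W.Dt ∈ D → ∀ u, Cn D A W (W.rm (dg u))) →
      (∀ W : Mat R, W.Dt ∈ D → ∀ u, Cn D A W (W.rm (un u))) →
      ∀ W W' : Mat R, W.Dt ∈ D → W'.Dt ∈ D → W.a * W'.c = W.c * W'.a → Cn D A W W' := by
  classical
  set m := (∏ d ∈ D, d) * ∏ d ∈ D, d with hm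
  have hm0 : m ≠ 0 := by
    rw [hm]; exact mul_ne_zero (Finset.prod_ne_zero_iff.2 hD) (Finset.prod_ne_zero_iff.2 hD)
  obtain ⟨P, hP0, hP⟩ := exists_div hA m hm0
  choose! Q hQ using fun s (hs : s ≠ 0) => exists_mod hA s hs
  let T : Set (R × Mat R) := ⋃ x ∈ D, ⋃ x' ∈ D, ⋃ p ∈ P, ⋃ s ∈ {s : R | p * s = x * x'},
    (fun t => (x, (⟨p, t, 0, s⟩ : Mat R))) '' (Q s : Set R)
  refine ⟨T, ?_, ?_⟩
  · refine D.finite_toSet.biUnion fun x _ => D.finite_toSet.biUnion fun x' _ =>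
      P.finite_toSet.biUnion fun p hp => Set.Finite.biUnion ?_ fun s _ =>
      (Q s).finite_toSet.image _
    apply Set.Subsingleton.finite
    intro s hs s' hs'
    exact mul_left_cancel₀ (hP0 p hp) (Eq.trans hs (Eq.symm hs'))
  · intro A hT h1 h2 W W' hW hW' hl
    have hx := hD _ hW
    have hx' := hD _ hW'
    have hps : (W.d * W'.a - W.b * W'.c) * (W.a * W'.d - W.c * W'.b) = W.Dt * W'.Dt := by
      simp only [Dt]
      linear_combination (W.d * W'.b - W.b * W'.d) * hl
    obtain ⟨u, p, hp, hu⟩ := hP (W.d * W'.a - W.b * W'.c) (by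
      rw [hm]
      exact (Dvd.intro _ hps).trans (mul_dvd_mul (Finset.dvd_prod_of_mem _ hW)
        (Finset.dvd_prod_of_mem _ hW')))
    set s := (u : R) * (W.a * W'.d - W.c * W'.b) with hs
    have hps' : p * s = W.Dt * W'.Dt := by
      rw [← hps, hu, hs]; ring
    have hs0 : s ≠ 0 := by
      intro h0
      rw [h0, mul_zero] at hps'
      exact mul_ne_zero hx hx' hps'.symm
    set W1 := W.rm (dg u) with hW1
    have hW1D : W1.Dt ∈ D := by rwa [hW1, Dt_dg]
    obtain ⟨y, t, ht, hyt⟩ := hQ s hs0 (W1.d * W'.b - W1.b * W'.d)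
    set W2 := W1.rm (un y) with hW2
    have hW2D : W2.Dt ∈ D := by rwa [hW2, Dt_un]
    refine ((h1 W hW u).trans (h2 W1 hW1D y)).trans ?_
    have hDt : W2.Dt = W.Dt := by rw [hW2, Dt_un, hW1, Dt_dg]
    refine Cn.of hW2D hW' (W.Dt, ⟨p, t, 0, s⟩) (hT ?_) ?_
    · simp only [T, Set.mem_iUnion]
      exact ⟨_, hW, _, hW', p, hp, s, hps', t, ht, rfl⟩
    · have hui := u.mul_inv
      have e1 : W1.a = W.a * u := by simp [hW1, rm, dg]
      have e2 : W1.b = W.b * (u⁻¹ : Rˣ) := by simp [hW1, rm, dg]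
      have e3 : W1.c = W.c * u := by simp [hW1, rm, dg]
      have e4 : W1.d = W.d * (u⁻¹ : Rˣ) := by simp [hW1, rm, dg]
      have f1 : W2.a = W1.a := by simp [hW2, rm, un]
      have f2 : W2.b = W1.a * y + W1.b := by simp [hW2, rm, un]
      have f3 : W2.c = W1.c := by simp [hW2, rm, un]
      have f4 : W2.d = W1.c * y + W1.d := by simp [hW2, rm, un]
      have hp' : p = W2.d * W'.a - W2.b * W'.c := by
        rw [f4, f2, e1, e2, e3, e4]
        linear_combination (-p) * hui - (u⁻¹ : Rˣ) * hu + y * u * hl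
      have hs' : s = W2.a * W'.d - W2.c * W'.b := by
        rw [f1, f3, e1, e3, hs]; ring
      have ht' : t = W2.d * W'.b - W2.b * W'.d := by
        rw [f4, f2]
        rw [f1, f3] at hs'
        linear_combination -hyt - y * hs'
      have hl2 : W2.a * W'.c = W2.c * W'.a := by
        rw [f1, f3, e1, e3]
        linear_combination (u : R) * hl
      rw [← hDt]
      change mv _ W2 W'
      clear_value W2
      refine ⟨by rwa [hDt], ?_, ?_, ?_, ?_⟩ <;> simp only [rm, hp', hs', ht', Dt]
      · linear_combination W2.b * hl2
      · ring
      · linear_combination W2.d * hl2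
      · ring

theorem good_line [CharZero R] (hA : Arith R ν R0) :
    ∃ D : Finset R, (∀ d ∈ D, d ≠ 0) ∧ ∀ a c : R, c ≠ 0 → ∃ W : Mat R, W.Dt ∈ D ∧
      a * W.c = c * W.a ∧ W.c ≠ 0 ∧ ν W.c ≤ ν c := by
  classical
  set M := ∏ r ∈ R0, r with hM
  have hM0 : M ≠ 0 := Finset.prod_ne_zero_iff.2 hA.r0
  obtain ⟨D, hD0, hD⟩ := exists_div hA (((ν M).factorial : ℕ) : R)
    (by exact_mod_cast (Nat.factorial_pos _).ne')
  refine ⟨D, hD0, fun a c hc => ?_⟩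
  have hex1 : ∃ k, ∃ a1 c1 : R, c1 ≠ 0 ∧ a * c1 = c * a1 ∧ ν c1 = k :=
    ⟨_, a, c, hc, mul_comm _ _, rfl⟩
  obtain ⟨a1, c1, hc1, hl, hk1⟩ := Nat.find_spec hex1
  have hmin1 : ∀ a' c' : R, c' ≠ 0 → a * c' = c * a' → ν c1 ≤ ν c' := by
    intro a' c' h h'
    rw [hk1]
    exact Nat.find_min' hex1 ⟨a', c', h, h', rfl⟩
  have hex2 : ∃ k, ∃ x y : R, a1 * x - c1 * y ≠ 0 ∧ ν (a1 * x - c1 * y) = k :=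
    ⟨_, 0, -1, by simpa using hc1, rfl⟩
  obtain ⟨x, y, hb0, hk2⟩ := Nat.find_spec hex2
  have hmin2 : ∀ x' y' : R, a1 * x' - c1 * y' ≠ 0 →
      ν (a1 * x - c1 * y) ≤ ν (a1 * x' - c1 * y') := by
    intro x' y' h
    rw [hk2]
    exact Nat.find_min' hex2 ⟨x', y', h, rfl⟩
  set b := a1 * x - c1 * y with hb
  have hdiv : ∀ x' y' : R, b ∣ M * (a1 * x' - c1 * y') := by
    intro x' y'
    obtain ⟨r, hr, q, hq⟩ := hA.approx (a1 * x' - c1 * y') b hb0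
    have e : r * (a1 * x' - c1 * y') - q * b = a1 * (r * x' - q * x) - c1 * (r * y' - q * y) := by
      rw [hb]; ring
    have h0 : r * (a1 * x' - c1 * y') - q * b = 0 := by
      by_contra h
      rw [e] at h hq
      exact absurd (hmin2 _ _ h) (not_le.2 hq)
    have h1 : b ∣ r * (a1 * x' - c1 * y') := ⟨q, by linear_combination h0⟩
    exact h1.trans (mul_dvd_mul_right (Finset.dvd_prod_of_mem _ hr) _)
  obtain ⟨a', ha'⟩ := hdiv 1 0
  obtain ⟨c', hc'⟩ := hdiv 0 (-1)
  have ha'' : M * a1 = b * a' := by linear_combination ha'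
  have hc'' : M * c1 = b * c' := by linear_combination hc'
  have hc0 : c' ≠ 0 := by
    intro h
    rw [h, mul_zero] at hc''
    exact mul_ne_zero hM0 hc1 hc''
  have h1 := hmin1 a' c' hc0 (mul_left_cancel₀ hb0 (by
    linear_combination (-a) * hc'' + c * ha'' + M * hl))
  have h2 : ν b ≤ ν M := by
    have h3 : ν M * ν c1 = ν b * ν c' := by rw [← hA.mul, ← hA.mul, hc'']
    have hpos : 0 < ν c' := Nat.pos_of_ne_zero fun h => hc0 ((hA.zero_iff _).1 h)
    refine Nat.le_of_mul_le_mul_right ?_ hpos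
    rw [← h3]
    exact Nat.mul_le_mul_left _ h1
  obtain ⟨u, d0, hd0, hu⟩ := hD b ((hA.dvd b).trans (by
    exact_mod_cast Nat.cast_dvd_cast (Nat.dvd_factorial
      (Nat.pos_of_ne_zero fun h => hb0 ((hA.zero_iff _).1 h)) h2)))
  refine ⟨⟨a1, (u⁻¹ : Rˣ) * y, c1, (u⁻¹ : Rˣ) * x⟩, ?_, hl, hc1, hmin1 a c hc (mul_comm _ _)⟩
  convert hd0 using 1
  simp only [Dt]
  have := u.inv_mul
  linear_combination (u⁻¹ : Rˣ) * hu + d0 * this - (u⁻¹ : Rˣ) * hb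

theorem sl2_fg [CharZero R] [Module.Finite ℤ R] (hU : Group.FG Rˣ) (hA : Arith R ν R0) :
    Group.FG (Matrix.SpecialLinearGroup (Fin 2) R) := by
  classical
  obtain ⟨D0, hD0, hline⟩ := good_line hA
  set D : Finset R := insert 1 (D0 ∪ (R0 ×ˢ D0).image fun x => -(x.1 * x.2)) with hDdef
  have hDsub : ∀ d ∈ D0, d ∈ D := fun d hd =>
    Finset.mem_insert_of_mem (Finset.mem_union_left _ hd)
  have hDr : ∀ r ∈ R0, ∀ d ∈ D0, -(r * d) ∈ D := fun r hr d hd =>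
    Finset.mem_insert_of_mem (Finset.mem_union_right _
      (Finset.mem_image.2 ⟨(r, d), Finset.mk_mem_product hr hd, rfl⟩))
  have hD1 : (1 : R) ∈ D := Finset.mem_insert_self _ _
  have hD : ∀ d ∈ D, d ≠ 0 := by
    intro d hd
    rw [hDdef, Finset.mem_insert, Finset.mem_union, Finset.mem_image] at hd
    rcases hd with rfl | hd | ⟨⟨r, d'⟩, h, rfl⟩
    · exact one_ne_zero
    · exact hD0 d hd
    · obtain ⟨h1, h2⟩ := Finset.mem_product.1 h
      exact neg_ne_zero.2 (mul_ne_zero (hA.r0 _ h1) (hD0 _ h2))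
  obtain ⟨T, hTf, hT⟩ := same_line hA D hD
  obtain ⟨Su, hSu⟩ := hU.out
  have hadd : AddGroup.FG R := by
    rw [← Module.Finite.iff_addGroup_fg]; infer_instance
  obtain ⟨St, hSt⟩ := hadd.out
  choose! Q hQ using fun s (hs : s ≠ 0) => exists_mod hA s hs
  set A : Set (R × Mat R) := T ∪ (fun u : Rˣ => ((1 : R), dg u)) '' (Su : Set Rˣ) ∪
    (fun t : R => ((1 : R), un t)) '' (St : Set R) ∪
    ⋃ r ∈ R0, (fun q : R => ((1 : R), (⟨-q, 1, r, 0⟩ : Mat R))) '' (Q r : Set R) with hAdef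
  have hAfin : A.Finite := by
    refine ((hTf.union (Su.finite_toSet.image _)).union (St.finite_toSet.image _)).union ?_
    exact R0.finite_toSet.biUnion fun r _ => (Q r).finite_toSet.image _
  have hdg : ∀ W : Mat R, W.Dt ∈ D → ∀ u, Cn D A W (W.rm (dg u)) := fun W hW u =>
    cn_dg hSu (fun u hu => Or.inl (Or.inl (Or.inr ⟨u, hu, rfl⟩))) W hW u
  have hun : ∀ W : Mat R, W.Dt ∈ D → ∀ u, Cn D A W (W.rm (un u)) := fun W hW u =>
    cn_un hSt (fun u hu => Or.inl (Or.inr ⟨u, hu, rfl⟩)) W hW u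
  have hsame := hT A (fun t ht => Or.inl (Or.inl (Or.inl ht))) hdg hun
  let I : Mat R := ⟨1, 0, 0, 1⟩
  have hI : I.Dt ∈ D := by
    have : I.Dt = 1 := by simp [I, Dt]
    rwa [this]
  have conn : ∀ k : ℕ, ∀ W : Mat R, W.Dt ∈ D → ν W.c = k → Cn D A I W := by
    intro k
    induction k using Nat.strong_induction_on with
    | _ k ih =>
    intro W hW hk
    by_cases hc : W.c = 0
    · exact hsame I W hI hW (by simp [I, hc])
    · obtain ⟨W', hW'0, hl, hc', hle⟩ := hline W.a W.c hc
      have hW' := hDsub _ hW'0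
      refine Cn.trans ?_ (hsame W W' hW hW' hl).symm
      obtain ⟨r, hr, q, hq⟩ := hA.approx W'.d W'.c hc'
      obtain ⟨t, q0, hq0, hqt⟩ := hQ r (hA.r0 r hr) q
      refine Cn.trans ?_ (hun W' hW' (-t)).symm
      let U : Mat R := ⟨r * W'.b - q * W'.a, W'.a, r * W'.d - q * W'.c, W'.c⟩
      have hUD : U.Dt ∈ D := by
        have : U.Dt = -(r * W'.Dt) := by simp only [U, Dt]; ring
        rw [this]
        exact hDr r hr _ hW'0
      have h1 := ih (ν U.c) (by rw [← hk]; exact lt_of_lt_of_le hq hle) U hUD rfl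
      refine h1.trans (Cn.symm ?_)
      refine Cn.of (by rwa [Dt_un]) hUD (1, ⟨-q0, 1, r, 0⟩) (Or.inr ?_) ?_
      · simp only [Set.mem_iUnion]
        exact ⟨r, hr, q0, hq0, rfl⟩
      · refine ⟨one_ne_zero, ?_, ?_, ?_, ?_⟩ <;> simp only [rm, un, U, hqt] <;> ring
  -- representatives
  set m := ∏ d ∈ D, d with hm
  have hm0 : m ≠ 0 := Finset.prod_ne_zero_iff.2 hD
  have hfin := hA.hfin m hm0
  let π := Ideal.Quotient.mk (Ideal.span {m})
  obtain ⟨Ω, -, hΩ⟩ := exists_reps (α := {W : Mat R // W.Dt ∈ D}) Set.univ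
    (fun W => ((⟨W.1.Dt, W.2⟩ : D), π W.1.a, π W.1.b, π W.1.c, π W.1.d))
  have hAfin' : Finite A := hAfin
  refine fg_of_graph (Γ := Matrix.SpecialLinearGroup (Fin 2) R) (A := A) {W : Mat R | W.Dt ∈ D} I
    hI (fun γ W hW => by simpa [Dt_smul] using hW) ((fun W : {W : Mat R // W.Dt ∈ D} => W.1) '' (Ω : Set {W : Mat R // W.Dt ∈ D}))
    (Ω.finite_toSet.image _) ?_ (fun W hW γ γ' h => smul_free W (hD _ hW) γ γ' h)
    (fun i => mv i.1) (fun i => mv_smul i.1) (fun i => mv_func i.1) ?_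
  · intro W hW
    obtain ⟨W', hW', h⟩ := hΩ ⟨W, hW⟩ trivial
    simp only [Prod.mk.injEq, Subtype.mk.injEq, π, Ideal.Quotient.eq,
      Ideal.mem_span_singleton'] at h
    obtain ⟨hdet, ⟨xa, ha⟩, ⟨xb, hb⟩, ⟨xc, hc⟩, ⟨xd, hd⟩⟩ := h
    obtain ⟨W', hW'D⟩ := W'
    simp only at hdet ha hb hc hd
    have hx := hD _ hW'D
    obtain ⟨z, hz⟩ : W'.Dt ∣ m := Finset.dvd_prod_of_mem _ hW'D
    rw [hz] at ha hb hc hd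
    have hdet2 := hdet
    simp only [Dt] at hdet2
    set x00 := 1 + (xa * z * W'.d - xb * z * W'.c) with h00
    set x01 := xb * z * W'.a - xa * z * W'.b with h01
    set x10 := xc * z * W'.d - xd * z * W'.c with h10
    set x11 := 1 + (xd * z * W'.a - xc * z * W'.b) with h11
    have k00 : W'.Dt * x00 = W.a * W'.d - W.b * W'.c := by
      rw [h00]; simp only [Dt] at *
      linear_combination W'.d * ha - W'.c * hb
    have k01 : W'.Dt * x01 = W.b * W'.a - W.a * W'.b := by
      rw [h01]; simp only [Dt] at *
      linear_combination W'.a * hb - W'.b * ha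
    have k10 : W'.Dt * x10 = W.c * W'.d - W.d * W'.c := by
      rw [h10]; simp only [Dt] at *
      linear_combination W'.d * hc - W'.c * hd
    have k11 : W'.Dt * x11 = W.d * W'.a - W.c * W'.b := by
      rw [h11]; simp only [Dt] at *
      linear_combination W'.a * hd - W'.b * hc
    have hdetγ : x00 * x11 - x01 * x10 = 1 := by
      apply mul_left_cancel₀ (mul_ne_zero hx hx)
      have : W'.Dt * W'.Dt * (x00 * x11 - x01 * x10)
          = (W'.Dt * x00) * (W'.Dt * x11) - (W'.Dt * x01) * (W'.Dt * x10) := by ring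
      rw [this, k00, k01, k10, k11]
      simp only [Dt]
      linear_combination (W'.a * W'.d - W'.b * W'.c) * hdet2
    refine ⟨⟨!![x00, x01; x10, x11], by rw [det_fin_two]; simpa using hdetγ⟩, W',
      ⟨⟨W', hW'D⟩, hW', rfl⟩, ?_⟩
    change W = (⟨x00 * W'.a + x01 * W'.c, x00 * W'.b + x01 * W'.d,
      x10 * W'.a + x11 * W'.c, x10 * W'.b + x11 * W'.d⟩ : Mat R)
    clear_value x00 x01 x10 x11
    simp only [Dt] at k00 k01 k10 k11 hx
    ext <;> apply mul_left_cancel₀ hx <;> simp only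
    · linear_combination -W'.a * k00 - W'.c * k01
    · linear_combination -W'.b * k00 - W'.d * k01
    · linear_combination -W'.a * k10 - W'.c * k11
    · linear_combination -W'.b * k10 - W'.d * k11
  · intro W hW
    have := conn _ W hW rfl
    refine Relation.EqvGen.mono ?_ _ _ this
    rintro y y' ⟨h1, h2, i, hi, hm⟩
    exact ⟨h1, h2, ⟨i, hi⟩, hm⟩

open NumberField in
theorem sl2_fg_ringOfIntegers (K : Type*) [Field K] [NumberField K] :
    Group.FG (Matrix.SpecialLinearGroup (Fin 2) (𝓞 K)) := by
  obtain ⟨R0, h⟩ := exists_arith K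
  exact sl2_fg (units_fg K) h

end QTFG

namespace QTStab
open Matrix

variable {R : Type*} [CommRing R]

theorem stable_range (hfin : ∀ b : R, b ≠ 0 → Finite (R ⧸ Ideal.span {b})) {k : ℕ} (hk : 2 ≤ k)
    (a : R) (v : Fin k → R) (x0 : R) (x : Fin k → R) (h : x0 * a + ∑ j, x j * v j = 1) :
    ∃ t y : Fin k → R, ∑ j, y j * (v j + t j * a) = 1 := by
  classical
  by_cases ha : a = 0
  · refine ⟨0, x, ?_⟩
    simpa [ha] using h
  let i0 : Fin k := ⟨0, by omega⟩
  let i1 : Fin k := ⟨1, by omega⟩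
  have hne : i1 ≠ i0 := by simp [i0, i1]
  obtain ⟨t0, ht0⟩ : ∃ t0 : R, v i0 + t0 * a ≠ 0 := by
    by_cases h0 : v i0 = 0
    · exact ⟨1, by simpa [h0] using ha⟩
    · exact ⟨0, by simpa using h0⟩
  set c := v i0 + t0 * a with hc
  have := hfin c ht0
  obtain ⟨i, j, hij, he⟩ := Finite.exists_ne_map_eq_of_infinite
    (fun n : ℕ => Ideal.Quotient.mk (Ideal.span {c}) (v i1 ^ n))
  have key : ∃ i m : ℕ, 1 ≤ m ∧ v i1 ^ i * (1 - v i1 ^ m) ∈ Ideal.span {c} := by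
    wlog hlt : i < j generalizing i j
    · exact this j i hij.symm he.symm (by omega)
    refine ⟨i, j - i, by omega, ?_⟩
    rw [Ideal.Quotient.eq] at he
    have e : v i1 ^ i * (1 - v i1 ^ (j - i)) = v i1 ^ i - v i1 ^ j := by
      rw [mul_sub, mul_one, ← pow_add]; congr 2; omega
    rwa [e]
  obtain ⟨i, m, hm, hmem⟩ := key
  let t : Fin k → R := fun j => if j = i0 then t0 else if j = i1 then 1 - v i1 ^ m else 0
  have htop : Ideal.span (Set.range fun j => v j + t j * a) = ⊤ := by
    by_contra hcon
    obtain ⟨p, hp, hle⟩ := Ideal.exists_le_maximal _ hcon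
    have hin : ∀ j, v j + t j * a ∈ p := fun j => hle (Ideal.subset_span ⟨j, rfl⟩)
    have hpr := hp.isPrime
    have h0 : c ∈ p := by simpa [t, hc] using hin i0
    have h1 : v i1 + (1 - v i1 ^ m) * a ∈ p := by simpa [t, hne] using hin i1
    have h2 : v i1 ^ i * (1 - v i1 ^ m) ∈ p :=
      (Ideal.span_singleton_le_iff_mem p).2 h0 hmem
    have hb : v i1 ∈ p := by
      rcases hpr.mem_or_mem h2 with h3 | h3
      · exact hpr.mem_of_pow_mem _ h3
      · have := p.sub_mem h1 (p.mul_mem_right a h3)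
        simpa using this
    have hbm : v i1 ^ m ∈ p := Ideal.pow_mem_of_mem p hb m hm
    have ha' : a ∈ p := by
      have e : a = (v i1 + (1 - v i1 ^ m) * a) - v i1 + v i1 ^ m * a := by ring
      rw [e]
      exact p.add_mem (p.sub_mem h1 hb) (p.mul_mem_right a hbm)
    apply hp.ne_top
    rw [Ideal.eq_top_iff_one, ← h]
    refine p.add_mem (p.mul_mem_left _ ha') (p.sum_mem fun j _ => p.mul_mem_left _ ?_)
    have := p.sub_mem (hin j) (p.mul_mem_left (t j) ha')
    simpa using this
  have h1 : (1 : R) ∈ Ideal.span (Set.range fun j => v j + t j * a) := by rw [htop]; trivial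
  rw [Ideal.mem_span_range_iff_exists_fun] at h1
  obtain ⟨y, hy⟩ := h1
  exact ⟨t, y, hy⟩

variable {k : ℕ}

/-- block matrix -/
def blk (a : R) (w v : Fin k → R) (h : Matrix (Fin k) (Fin k) R) :
    Matrix (Fin (k + 1)) (Fin (k + 1)) R :=
  of (Fin.cons (Fin.cons a w) (fun i => Fin.cons (v i) (h i)))

@[simp] theorem blk_00 (a : R) (w v : Fin k → R) (h : Matrix (Fin k) (Fin k) R) :
    blk a w v h 0 0 = a := rfl
@[simp] theorem blk_0s (a : R) (w v : Fin k → R) (h : Matrix (Fin k) (Fin k) R) (j) :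
    blk a w v h 0 (Fin.succ j) = w j := rfl
@[simp] theorem blk_s0 (a : R) (w v : Fin k → R) (h : Matrix (Fin k) (Fin k) R) (j) :
    blk a w v h (Fin.succ j) 0 = v j := rfl
@[simp] theorem blk_ss (a : R) (w v : Fin k → R) (h : Matrix (Fin k) (Fin k) R) (i j) :
    blk a w v h (Fin.succ i) (Fin.succ j) = h i j := rfl

theorem blk_eq (A : Matrix (Fin (k + 1)) (Fin (k + 1)) R) :
    A = blk (A 0 0) (fun j => A 0 j.succ) (fun j => A j.succ 0) (fun i j => A i.succ j.succ) := by
  ext i j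
  refine Fin.cases ?_ (fun i => ?_) i <;> refine Fin.cases ?_ (fun j => ?_) j <;> rfl

theorem blk_mul (a a' : R) (w v w' v' : Fin k → R) (h h' : Matrix (Fin k) (Fin k) R) :
    blk a w v h * blk a' w' v' h' = blk (a * a' + w ⬝ᵥ v') (a • w' + w ᵥ* h')
      (a' • v + h *ᵥ v') (vecMulVec v w' + h * h') := by
  ext i j
  refine Fin.cases ?_ (fun i => ?_) i <;> refine Fin.cases ?_ (fun j => ?_) j <;>
    simp [Matrix.mul_apply, Fin.sum_univ_succ, dotProduct, vecMul, mulVec, vecMulVec, mul_comm]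

theorem blk_one : (1 : Matrix (Fin (k + 1)) (Fin (k + 1)) R) = blk 1 0 0 1 := by
  ext i j
  refine Fin.cases ?_ (fun i => ?_) i <;> refine Fin.cases ?_ (fun j => ?_) j <;>
    simp [Matrix.one_apply, Fin.succ_ne_zero, (Fin.succ_ne_zero _).symm]

theorem det_blk (w : Fin k → R) (h : Matrix (Fin k) (Fin k) R) : (blk 1 w 0 h).det = h.det := by
  rw [det_succ_column_zero, Fin.sum_univ_succ]
  simp
  congr 1

theorem det_blk' (v : Fin k → R) (h : Matrix (Fin k) (Fin k) R) : (blk 1 0 v h).det = h.det := by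
  rw [det_succ_row_zero, Fin.sum_univ_succ]
  simp
  congr 1

/-- stabilisation -/
def stab : SpecialLinearGroup (Fin k) R →* SpecialLinearGroup (Fin (k + 1)) R where
  toFun M := ⟨blk 1 0 0 M.1, by rw [det_blk]; exact M.2⟩
  map_one' := by
    apply Subtype.ext
    change blk 1 0 0 1 = 1
    rw [blk_one]
  map_mul' M N := by
    apply Subtype.ext
    change blk 1 0 0 (M.1 * N.1) = blk 1 0 0 M.1 * blk 1 0 0 N.1
    rw [blk_mul]
    simp

/-- column unipotent -/
def colU (t : Fin k → R) : SpecialLinearGroup (Fin (k + 1)) R :=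
  ⟨blk 1 0 t 1, by rw [det_blk', det_one]⟩
/-- row unipotent -/
def rowU (t : Fin k → R) : SpecialLinearGroup (Fin (k + 1)) R :=
  ⟨blk 1 t 0 1, by rw [det_blk, det_one]⟩

theorem colU_add (s t : Fin k → R) : colU (s + t) = colU s * colU t := by
  apply Subtype.ext
  change blk _ _ _ _ = blk _ _ _ _ * blk _ _ _ _
  rw [blk_mul]
  simp

theorem rowU_add (s t : Fin k → R) : rowU (s + t) = rowU s * rowU t := by
  apply Subtype.ext
  change blk _ _ _ _ = blk _ _ _ _ * blk _ _ _ _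
  rw [blk_mul]
  simp [add_comm]

theorem colU_zero : colU (0 : Fin k → R) = 1 := by
  apply Subtype.ext
  change blk _ _ _ _ = 1
  rw [blk_one]

theorem rowU_zero : rowU (0 : Fin k → R) = 1 := by
  apply Subtype.ext
  change blk _ _ _ _ = 1
  rw [blk_one]

theorem colU_single (j : Fin k) (x : R) :
    colU (Pi.single j x) = SpecialLinearGroup.transvection (Fin.succ_ne_zero j) x := by
  apply Subtype.ext
  change blk _ _ _ _ = 1 + single _ _ _
  rw [blk_one]
  ext i j'
  refine Fin.cases ?_ (fun i => ?_) i <;> refine Fin.cases ?_ (fun j => ?_) j' <;>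
    simp [Matrix.single_apply, Pi.single_apply, Fin.succ_ne_zero, (Fin.succ_ne_zero _).symm,
      eq_comm]

theorem rowU_single (j : Fin k) (x : R) :
    rowU (Pi.single j x) = SpecialLinearGroup.transvection (Fin.succ_ne_zero j).symm x := by
  apply Subtype.ext
  change blk _ _ _ _ = 1 + single _ _ _
  rw [blk_one]
  ext i j'
  refine Fin.cases ?_ (fun i => ?_) i <;> refine Fin.cases ?_ (fun j => ?_) j' <;>
    simp [Matrix.single_apply, Pi.single_apply, Fin.succ_ne_zero, (Fin.succ_ne_zero _).symm,
      eq_comm]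

variable {l : SpecialLinearGroup (Fin (k + 1)) R → ℝ} {C : ℝ}

theorem sum_le {U : (Fin k → R) → SpecialLinearGroup (Fin (k + 1)) R} (hl : QTLen l)
    (h0 : U 0 = 1) (hadd : ∀ s t, U (s + t) = U s * U t) (hs : ∀ j x, l (U (Pi.single j x)) ≤ C)
    (t : Fin k → R) : l (U t) ≤ k * C := by
  classical
  have h : ∀ s : Finset (Fin k), l (U (∑ j ∈ s, Pi.single j (t j))) ≤ s.card * C := by
    intro s
    induction s using Finset.induction_on with
    | empty => simp [h0, hl.one]
    | insert j s hj ih =>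
      rw [Finset.sum_insert hj, hadd, Finset.card_insert_of_notMem hj]
      have h1 := hl.mul_le (U (Pi.single j (t j))) (U (∑ j ∈ s, Pi.single j (t j)))
      have h2 := hs j (t j)
      push_cast
      linarith
  have := h Finset.univ
  rw [Finset.univ_sum_single t] at this
  simpa using this

theorem step (hfin : ∀ b : R, b ≠ 0 → Finite (R ⧸ Ideal.span {b})) (hk : 2 ≤ k) (hl : QTLen l)
    (htv : ∀ (i j : Fin (k + 1)) (hij : i ≠ j) (b : R),
      l (SpecialLinearGroup.transvection hij b) ≤ C)
    {B : ℝ} (hB : ∀ M, l (stab M) ≤ B) (g : SpecialLinearGroup (Fin (k + 1)) R) :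
    l g ≤ B + 4 * (k * C) := by
  have hcol : ∀ t : Fin k → R, l (colU t) ≤ k * C :=
    sum_le hl colU_zero colU_add fun j x => by rw [colU_single]; exact htv _ _ _ _
  have hrow : ∀ t : Fin k → R, l (rowU t) ≤ k * C :=
    sum_le hl rowU_zero rowU_add fun j x => by rw [rowU_single]; exact htv _ _ _ _
  obtain ⟨t, y, hy⟩ := stable_range hfin hk (g.1 0 0) (fun j => g.1 j.succ 0)
    ((g⁻¹).1 0 0) (fun j => (g⁻¹).1 0 j.succ) (by
      have h1 : (g⁻¹).1 * g.1 = 1 := by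
        rw [← Matrix.SpecialLinearGroup.coe_mul, inv_mul_cancel]; rfl
      have := congrFun (congrFun h1 0) 0
      rw [Matrix.mul_apply, Fin.sum_univ_succ] at this
      simpa using this)
  set a := g.1 0 0 with ha
  set v : Fin k → R := fun j => g.1 j.succ 0 with hv
  set w : Fin k → R := fun j => g.1 0 j.succ with hw
  obtain ⟨w1, h1, e1⟩ : ∃ w1 h1, (colU t * g).1 = blk a w1 (v + a • t) h1 := by
    have : (colU t * g).1 = blk 1 0 t 1 * g.1 := rfl
    obtain ⟨h0, hg⟩ : ∃ h0 : Matrix (Fin k) (Fin k) R, g.1 = blk a w v h0 := ⟨_, blk_eq g.1⟩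
    have e : blk 1 0 t 1 * g.1 = blk 1 0 t 1 * blk a w v h0 := congrArg _ hg
    have ev : v + a • t = a • t + v := add_comm _ _
    rw [this, e, blk_mul, ev]
    simp
    exact ⟨_, _, rfl⟩
  set y' : Fin k → R := (1 - a) • y with hy'
  obtain ⟨w2, h2, e2⟩ : ∃ w2 h2, (rowU y' * (colU t * g)).1 = blk 1 w2 (v + a • t) h2 := by
    have : (rowU y' * (colU t * g)).1 = blk 1 y' 0 1 * (colU t * g).1 := rfl
    rw [this, e1, blk_mul]
    have e : 1 * a + y' ⬝ᵥ (v + a • t) = 1 := by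
      rw [hy', smul_dotProduct]
      have : y ⬝ᵥ (v + a • t) = 1 := by
        rw [← hy, dotProduct]
        refine Finset.sum_congr rfl fun j _ => ?_
        simp [mul_comm]
        rfl
      rw [this]; simp
    rw [e]
    simp
    exact ⟨_, _, rfl⟩
  obtain ⟨w3, h3, e3⟩ : ∃ w3 h3, (colU (-(v + a • t)) * (rowU y' * (colU t * g))).1
      = blk 1 w3 0 h3 := by
    have : (colU (-(v + a • t)) * (rowU y' * (colU t * g))).1
      = blk 1 0 (-(v + a • t)) 1 * (rowU y' * (colU t * g)).1 := rfl
    rw [this, e2, blk_mul]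
    simp
    exact ⟨_, _, rfl⟩
  have e4 : (colU (-(v + a • t)) * (rowU y' * (colU t * g)) * rowU (-w3)).1
      = blk 1 0 0 h3 := by
    have : (colU (-(v + a • t)) * (rowU y' * (colU t * g)) * rowU (-w3)).1
      = (colU (-(v + a • t)) * (rowU y' * (colU t * g))).1 * blk 1 (-w3) 0 1 := rfl
    rw [this, e3, blk_mul]
    simp
  have hd : h3.det = 1 := by
    rw [← det_blk 0, ← e4]
    exact (colU (-(v + a • t)) * (rowU y' * (colU t * g)) * rowU (-w3)).2
  have e5 : colU (-(v + a • t)) * (rowU y' * (colU t * g)) * rowU (-w3) = stab ⟨h3, hd⟩ :=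
    Subtype.ext e4
  have e6 : g = (colU t)⁻¹ * ((rowU y')⁻¹ * ((colU (-(v + a • t)))⁻¹ *
      (stab ⟨h3, hd⟩ * (rowU (-w3))⁻¹))) := by
    rw [← e5]; group
  have b1 := hl.mul_le (colU t)⁻¹ ((rowU y')⁻¹ * ((colU (-(v + a • t)))⁻¹ *
      (stab ⟨h3, hd⟩ * (rowU (-w3))⁻¹)))
  rw [← e6] at b1
  have b2 := hl.mul_le (rowU y')⁻¹ ((colU (-(v + a • t)))⁻¹ *
      (stab ⟨h3, hd⟩ * (rowU (-w3))⁻¹))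
  have b3 := hl.mul_le (colU (-(v + a • t)))⁻¹ (stab ⟨h3, hd⟩ * (rowU (-w3))⁻¹)
  have b4 := hl.mul_le (stab ⟨h3, hd⟩) (rowU (-w3))⁻¹
  rw [hl.inv] at b1 b2 b3 b4
  have c1 := hcol t
  have c2 := hrow y'
  have c3 := hcol (-(v + a • t))
  have c4 := hrow (-w3)
  have c5 := hB ⟨h3, hd⟩
  linarith

open QTLen in
theorem all_bdd [Module.Finite ℤ R] (hfin : ∀ b : R, b ≠ 0 → Finite (R ⧸ Ideal.span {b}))
    (hfg : Group.FG (SpecialLinearGroup (Fin 2) R)) (k : ℕ) :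
    ∀ l : SpecialLinearGroup (Fin (k + 3)) R → ℝ, QTLen l → ∃ B, ∀ g, l g ≤ B := by
  induction k with
  | zero =>
    intro l hl
    obtain ⟨C, H⟩ := exists_ctx hl
    obtain ⟨s, hs⟩ := fg_closure (fun M : SpecialLinearGroup (Fin 2) R => l (emb M))
      (fun M => hl.nonneg _)
    obtain ⟨B, hB⟩ := (hl.comp emb).bounded (H.emb_NL hfin) s hs
    refine ⟨(B + 2 * C) + 4 * ((2 : ℕ) * C), step hfin le_rfl hl H.tv ?_⟩
    intro M
    have hdet : M.1 0 0 * M.1 1 1 - M.1 0 1 * M.1 1 0 = 1 := by rw [← det_fin_two]; exact M.2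
    have h := H.b23_le (a := M.1 1 1) (b := -M.1 1 0) (c := -M.1 0 1) (d := M.1 0 0)
      (by linear_combination hdet)
    have e : stab M = b23 (M.1 0 0) (- -M.1 0 1) (- -M.1 1 0) (M.1 1 1)
        (by linear_combination hdet) := by
      apply Subtype.ext
      change blk 1 0 0 M.1 = !![_, _, _; _, _, _; _, _, _]
      ext i j
      fin_cases i <;> fin_cases j <;> simp <;> rfl
    rw [e]
    refine h.trans ?_
    rw [b12_eq_emb]
    have := hB ⟨!![M.1 1 1, -M.1 1 0; -M.1 0 1, M.1 0 0], by
      rw [det_fin_two]; simp; linear_combination hdet⟩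
    linarith
  | succ k ih =>
    intro l hl
    obtain ⟨C, h0, hC⟩ := transvection_bdd hl (by simp)
    obtain ⟨B, hB⟩ := ih (fun M => l (stab M)) (hl.comp stab)
    exact ⟨_, step hfin (by omega) hl hC hB⟩

end QTStab


open NumberField

/-- For `n ≥ 3`, every isometric action of `SL(n, 𝓞 K)` on a metric space `X`
admitting a quasi-isometry to a simplicial tree has bounded orbits (Property (QFA)). -/
theorem sln_action_on_quasitree_bounded_orbit
    (K : Type*) [Field K] [NumberField K]
    (n : ℕ) (hn : 3 ≤ n)
    (X : Type*) [MetricSpace X]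
    -- a simplicial tree `T` on vertex set `V`, with its graph metric
    (V : Type*) (T : SimpleGraph V) (hT : T.IsTree)
    -- a quasi-isometry from `X` to the tree
    (q : X → V) (Kq Cq : ℝ) (hKq : 1 ≤ Kq) (hCq : 0 ≤ Cq)
    (hqi_lower : ∀ x₁ x₂ : X, dist x₁ x₂ / Kq - Cq ≤ (T.dist (q x₁) (q x₂) : ℝ))
    (hqi_upper : ∀ x₁ x₂ : X, (T.dist (q x₁) (q x₂) : ℝ) ≤ Kq * dist x₁ x₂ + Cq)
    (hdense : ∀ v : V, ∃ x : X, (T.dist v (q x) : ℝ) ≤ Cq)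
    -- an action of `SL(n, 𝓞 K)` on `X` by isometries
    (ρ : Matrix.SpecialLinearGroup (Fin n) (𝓞 K) →* (X ≃ᵢ X))
    (x : X) :
    Bornology.IsBounded (Set.range fun g : Matrix.SpecialLinearGroup (Fin n) (𝓞 K) => ρ g x) := by
  obtain ⟨k, rfl⟩ : ∃ k, n = k + 3 := ⟨n - 3, by omega⟩
  obtain ⟨l, hl, R, hR, hb⟩ := QTGeom.exists_qtlen X V T hT q Kq Cq hKq hCq hqi_lower hqi_upper
    hdense ρ x
  obtain ⟨R0, hA⟩ := QTFG.exists_arith K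
  obtain ⟨B, hB⟩ := QTStab.all_bdd hA.hfin (QTFG.sl2_fg_ringOfIntegers K) k l hl
  refine (Metric.isBounded_closedBall (x := x) (r := R * B)).subset ?_
  rintro _ ⟨g, rfl⟩
  rw [Metric.mem_closedBall, dist_comm]
  exact (hb g).trans (mul_le_mul_of_nonneg_left (hB g) hR)
end

section
/- Let X be a metric space that is δ-hyperbolic (four-point condition) for some δ ≥ 0, and let A, B, C, D ∈ X. If the Gromov products satisfy (C,D)_A > d(A,B) and (C,D)_B > d(A,B), then |(d(B,C) − d(A,C)) − (d(B,D) − d(A,D))| ≤ 4δ. -/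
/-- In a δ-hyperbolic metric space (four-point condition), if the Gromov
products `(C,D)_A` and `(C,D)_B` both exceed `d(A,B)`, then
`|(d(B,C) − d(A,C)) − (d(B,D) − d(A,D))| ≤ 4δ`. -/
theorem gromov_product_observation
    (X : Type*) [MetricSpace X]
    (δ : ℝ) (hδ : 0 ≤ δ)
    (hhyp : ∀ p₁ p₂ p₃ p₄ : X,
      dist p₁ p₄ + dist p₂ p₃ ≤
        max (dist p₁ p₂ + dist p₃ p₄) (dist p₁ p₃ + dist p₂ p₄) + 2 * δ)
    (A B C D : X)
    (hA : dist A B < (dist C A + dist D A - dist C D) / 2)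
    (hB : dist A B < (dist C B + dist D B - dist C D) / 2) :
    |(dist B C - dist A C) - (dist B D - dist A D)| ≤ 4 * δ := by
  have h1 := hhyp B A D C
  have h2 := hhyp A B D C
  have t1 := dist_triangle A B C
  have t2 := dist_triangle A B D
  simp only [dist_comm B A, dist_comm D C, dist_comm D A, dist_comm C A,
    dist_comm D B, dist_comm C B] at *
  rw [max_eq_right (by linarith)] at h1 h2
  rw [abs_le]
  constructor <;> linarith
end

section
/- Let X be a metric space that is δ-hyperbolic (four-point condition) for some δ ≥ 0, let x = {x_i} be a sequence in X tending to infinity with basepoint x₀, and let a ∈ X. Then for all sufficiently large n, |η_x(a) − (d(a,x_n) − d(x₀,x_n))| ≤ 4δ, where η_x(a) = limsup_{n→∞} (d(a,x_n) − d(x₀,x_n)). -/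
open Filter

/-- Let `X` be δ-hyperbolic (four-point condition) and let `{x i}` tend to
infinity with basepoint `x 0`. Then for all sufficiently large `n`,
`|η_x(a) − (d(a, x n) − d(x 0, x n))| ≤ 4δ`, where
`η_x(a) = limsup (d(a, x n) − d(x 0, x n))`. -/
theorem quasi_horofunction_approximation
    (X : Type*) [MetricSpace X]
    (δ : ℝ) (hδ : 0 ≤ δ)
    (hhyp : ∀ p₁ p₂ p₃ p₄ : X,
      dist p₁ p₄ + dist p₂ p₃ ≤
        max (dist p₁ p₂ + dist p₃ p₄) (dist p₁ p₃ + dist p₂ p₄) + 2 * δ)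
    (x : ℕ → X)
    -- `{x i}` tends to infinity: the Gromov products `(x i, x j)_{x 0} → ∞`
    (hinf : Tendsto
      (fun p : ℕ × ℕ =>
        (dist (x p.1) (x 0) + dist (x p.2) (x 0) - dist (x p.1) (x p.2)) / 2)
      atTop atTop)
    (a : X) :
    ∀ᶠ n in atTop,
      |limsup (fun m => dist a (x m) - dist (x 0) (x m)) atTop -
        (dist a (x n) - dist (x 0) (x n))| ≤ 4 * δ := by
  obtain ⟨⟨N₁, N₂⟩, hN⟩ := eventually_atTop.1
    (hinf.eventually_ge_atTop (dist a (x 0) + δ + 1))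
  have key : ∀ m n, max N₁ N₂ ≤ m → max N₁ N₂ ≤ n →
      dist a (x m) - dist (x 0) (x m) ≤ dist a (x n) - dist (x 0) (x n) + 2 * δ := by
    intro m n hm hn
    have hG := hN (m, n) ⟨le_trans (le_max_left _ _) hm, le_trans (le_max_right _ _) hn⟩
    simp only at hG
    have h := hhyp a (x 0) (x n) (x m)
    have h1 := dist_triangle (x m) a (x 0)
    have e1 := dist_comm (x m) a
    have e2 := dist_comm (x m) (x 0)
    have e3 := dist_comm (x n) (x 0)
    have e4 := dist_comm (x m) (x n)
    rcases max_cases (dist a (x 0) + dist (x n) (x m)) (dist a (x n) + dist (x 0) (x m)) with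
      ⟨h2, _⟩ | ⟨h2, _⟩ <;> rw [h2] at h <;> linarith
  have hlow : ∀ m, -dist a (x 0) ≤ dist a (x m) - dist (x 0) (x m) := by
    intro m
    have := dist_triangle (x 0) a (x m)
    have := dist_comm (x 0) a
    linarith
  have hup : ∀ m, dist a (x m) - dist (x 0) (x m) ≤ dist a (x 0) := by
    intro m
    have := dist_triangle a (x 0) (x m)
    linarith
  have hbdd : IsBoundedUnder (· ≤ ·) atTop (fun m => dist a (x m) - dist (x 0) (x m)) :=
    isBoundedUnder_of ⟨_, hup⟩
  have hbdd' : IsBoundedUnder (· ≥ ·) atTop (fun m => dist a (x m) - dist (x 0) (x m)) :=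
    isBoundedUnder_of ⟨_, hlow⟩
  filter_upwards [eventually_ge_atTop (max N₁ N₂)] with n hn
  have hU := limsup_le_of_le hbdd'.isCoboundedUnder_le
    ((eventually_ge_atTop (max N₁ N₂)).mono fun m hm => key m n hm hn)
  have hL : dist a (x n) - dist (x 0) (x n) - 2 * δ ≤
      limsup (fun m => dist a (x m) - dist (x 0) (x m)) atTop := by
    refine le_limsup_of_frequently_le (Eventually.frequently ?_) hbdd
    filter_upwards [eventually_ge_atTop (max N₁ N₂)] with m hm
    have := key n m hn hm
    linarith
  rw [abs_le]
  constructor <;> linarith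
end

section
/- Let X be a metric space that is δ-hyperbolic (four-point condition) for some δ ≥ 0. Let x = {x_i} and y = {y_i} be two sequences in X tending to infinity (with common basepoint x₀ = the 0-th term of x) which are equivalent, i.e. lim_{i,j→∞} (x_i, y_j)_{x₀} = ∞. Then for every point a ∈ X, |η_x(a) − η_y(a) − η_x(y₀)| ≤ 16δ, where η_x(a) = limsup_{n→∞} (d(a,x_n) − d(x₀,x_n)) and η_y(a) = limsup_{n→∞} (d(a,y_n) − d(y₀,y_n)). -/
open Filter

theorem limsup_close (u : ℕ → ℝ) (c e : ℝ) (N : ℕ) (h : ∀ m, N ≤ m → |u m - c| ≤ e) :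
    |limsup u atTop - c| ≤ e := by
  have h1 : ∀ᶠ m in atTop, u m ≤ c + e := by
    filter_upwards [eventually_ge_atTop N] with m hm
    linarith [(abs_le.mp (h m hm)).2]
  have h2 : ∀ᶠ m in atTop, c - e ≤ u m := by
    filter_upwards [eventually_ge_atTop N] with m hm
    linarith [(abs_le.mp (h m hm)).1]
  have hb : IsBoundedUnder (· ≤ ·) atTop u := ⟨c + e, by simpa using h1⟩
  have hb' : IsBoundedUnder (· ≥ ·) atTop u := ⟨c - e, by simpa using h2⟩
  have a1 : limsup u atTop ≤ c + e := limsup_le_of_le hb'.isCoboundedUnder_le h1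
  have a2 : c - e ≤ limsup u atTop := le_limsup_of_frequently_le h2.frequently hb
  rw [abs_le]
  constructor <;> linarith

theorem pair_close {X : Type*} [MetricSpace X] (δ : ℝ)
    (hhyp : ∀ p₁ p₂ p₃ p₄ : X,
      dist p₁ p₄ + dist p₂ p₃ ≤
        max (dist p₁ p₂ + dist p₃ p₄) (dist p₁ p₃ + dist p₂ p₄) + 2 * δ)
    (o p q u v : X)
    (h : dist o p + dist o q + dist p q + 2 * δ <
      2 * ((dist u o + dist v o - dist u v) / 2)) :
    |(dist p u - dist q u) - (dist p v - dist q v)| ≤ 2 * δ := by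
  have t1 := dist_triangle u p o
  have t2 := dist_triangle v p o
  have t3 := dist_triangle u q o
  have t4 := dist_triangle v q o
  have e1 := hhyp p q v u
  have e2 := hhyp p q u v
  simp only [dist_comm u p, dist_comm v p, dist_comm u q, dist_comm v q, dist_comm v u,
    dist_comm p o, dist_comm q o] at *
  rw [abs_le]
  constructor
  · rcases max_cases (dist p q + dist u v) (dist p u + dist q v) with ⟨h', _⟩ | ⟨h', _⟩ <;>
      rw [h'] at e2 <;> linarith
  · rcases max_cases (dist p q + dist u v) (dist p v + dist q u) with ⟨h', _⟩ | ⟨h', _⟩ <;>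
      rw [h'] at e1 <;> linarith

/-- Let `X` be δ-hyperbolic (four-point condition), and let `{x i}` and
`{y i}` be equivalent sequences tending to infinity. Then for every `a ∈ X`,
`|η_x(a) − η_y(a) − η_x(y 0)| ≤ 16δ`. -/
theorem quasi_horofunction_change_of_sequence
    (X : Type*) [MetricSpace X]
    (δ : ℝ) (hδ : 0 ≤ δ)
    (hhyp : ∀ p₁ p₂ p₃ p₄ : X,
      dist p₁ p₄ + dist p₂ p₃ ≤
        max (dist p₁ p₂ + dist p₃ p₄) (dist p₁ p₃ + dist p₂ p₄) + 2 * δ)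
    (x y : ℕ → X)
    -- `{x i}` tends to infinity
    (hx : Tendsto
      (fun p : ℕ × ℕ =>
        (dist (x p.1) (x 0) + dist (x p.2) (x 0) - dist (x p.1) (x p.2)) / 2)
      atTop atTop)
    -- `{y i}` tends to infinity
    (hy : Tendsto
      (fun p : ℕ × ℕ =>
        (dist (y p.1) (x 0) + dist (y p.2) (x 0) - dist (y p.1) (y p.2)) / 2)
      atTop atTop)
    -- the two sequences are equivalent: `(x i, y j)_{x 0} → ∞`
    (hequiv : Tendsto
      (fun p : ℕ × ℕ =>
        (dist (x p.1) (x 0) + dist (y p.2) (x 0) - dist (x p.1) (y p.2)) / 2)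
      atTop atTop)
    (a : X) :
    |limsup (fun m => dist a (x m) - dist (x 0) (x m)) atTop -
      limsup (fun m => dist a (y m) - dist (y 0) (y m)) atTop -
      limsup (fun m => dist (y 0) (x m) - dist (x 0) (x m)) atTop| ≤ 16 * δ := by
  have key : ∀ (w z : ℕ → X), Tendsto
      (fun p : ℕ × ℕ =>
        (dist (w p.1) (x 0) + dist (z p.2) (x 0) - dist (w p.1) (z p.2)) / 2)
      atTop atTop → ∀ p q : X, ∃ N, ∀ m n, N ≤ m → N ≤ n →
      |(dist p (w m) - dist q (w m)) - (dist p (z n) - dist q (z n))| ≤ 2 * δ := by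
    intro w z hwz p q
    obtain ⟨⟨N, M⟩, hN⟩ := eventually_atTop.mp (hwz.eventually_gt_atTop
      ((dist (x 0) p + dist (x 0) q + dist p q + 2 * δ) / 2))
    refine ⟨max N M, fun m n hm hn => pair_close δ hhyp (x 0) p q (w m) (z n) ?_⟩
    have := hN (m, n) ⟨le_trans (le_max_left _ _) hm, le_trans (le_max_right _ _) hn⟩
    simp only at this
    linarith
  obtain ⟨N1, h1⟩ := key x x hx a (x 0)
  obtain ⟨N2, h2⟩ := key y y hy a (y 0)
  obtain ⟨N3, h3⟩ := key x x hx (y 0) (x 0)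
  obtain ⟨N4, h4⟩ := key x y hequiv a (y 0)
  obtain ⟨N, g1, g2, g3, g4⟩ : ∃ N, N1 ≤ N ∧ N2 ≤ N ∧ N3 ≤ N ∧ N4 ≤ N :=
    ⟨N1 + N2 + N3 + N4, by omega, by omega, by omega, by omega⟩
  have l1 := limsup_close (fun m => dist a (x m) - dist (x 0) (x m)) _ _ N
    (fun m hm => h1 m N (g1.trans hm) g1)
  have l2 := limsup_close (fun m => dist a (y m) - dist (y 0) (y m)) _ _ N
    (fun m hm => h2 m N (g2.trans hm) g2)
  have l3 := limsup_close (fun m => dist (y 0) (x m) - dist (x 0) (x m)) _ _ N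
    (fun m hm => h3 m N (g3.trans hm) g3)
  have l4 := h4 N N g4 g4
  rw [abs_le] at *
  constructor <;> linarith [l1.1, l1.2, l2.1, l2.2, l3.1, l3.2, l4.1, l4.2]
end

section
/- Let X be a metric space that is δ-hyperbolic (four-point condition) for some δ ≥ 0, let x = {x_i} be a sequence in X tending to infinity with basepoint x₀, and let g be an isometry of X such that the sequence {g·x_i} is equivalent to {x_i}. Then for every a ∈ X, |η_x(g·a) − η_x(a) − η_x(g·x₀)| ≤ 16δ, where η_x(a) = limsup_{n→∞} (d(a,x_n) − d(x₀,x_n)). -/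
open Filter

theorem qh_limsup (f : ℕ → ℝ) (K : ℝ) (N : ℕ) (h : ∀ m ≥ N, |f m - f N| ≤ K) :
    |limsup f atTop - f N| ≤ K := by
  have h1 : ∀ᶠ m in atTop, f m ≤ f N + K := by
    filter_upwards [eventually_ge_atTop N] with m hm
    have := (abs_le.1 (h m hm)).2
    linarith
  have h2 : ∀ᶠ m in atTop, f N - K ≤ f m := by
    filter_upwards [eventually_ge_atTop N] with m hm
    have := (abs_le.1 (h m hm)).1
    linarith
  have b1 : IsBoundedUnder (· ≤ ·) atTop f := ⟨f N + K, by simpa using h1⟩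
  have b2 : IsBoundedUnder (· ≥ ·) atTop f := ⟨f N - K, by simpa using h2⟩
  have l1 : limsup f atTop ≤ f N + K := limsup_le_of_le b2.isCoboundedUnder_le h1
  have l2 : f N - K ≤ limsup f atTop := le_limsup_of_frequently_le h2.frequently b1
  rw [abs_le]
  constructor <;> linarith

theorem qh_key {X : Type*} [MetricSpace X] (δ : ℝ)
    (hhyp : ∀ p₁ p₂ p₃ p₄ : X,
      dist p₁ p₄ + dist p₂ p₃ ≤
        max (dist p₁ p₂ + dist p₃ p₄) (dist p₁ p₃ + dist p₂ p₄) + 2 * δ)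
    (x y : ℕ → X) (o : X)
    (hxy : Tendsto
      (fun p : ℕ × ℕ =>
        (dist (x p.1) o + dist (y p.2) o - dist (x p.1) (y p.2)) / 2)
      atTop atTop) (b c : X) :
    ∃ N, ∀ m ≥ N, ∀ n ≥ N,
      dist b (x m) - dist c (x m) - (dist b (y n) - dist c (y n)) ≤ 2 * δ := by
  have h := hxy.eventually_gt_atTop ((dist b c + dist b o + dist c o + 2 * δ) / 2)
  obtain ⟨⟨N1, N2⟩, hN⟩ := eventually_atTop.1 h
  refine ⟨max N1 N2, fun m hm n hn => ?_⟩
  have h1 := hN (m, n) ⟨le_trans (le_max_left _ _) hm, le_trans (le_max_right _ _) hn⟩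
  simp only at h1
  have h2 := hhyp b c (y n) (x m)
  have t1 := dist_triangle (x m) b o
  have t2 := dist_triangle (y n) c o
  rw [dist_comm (x m) b] at t1
  rw [dist_comm (y n) c] at t2
  rw [dist_comm (y n) (x m)] at h2
  rcases max_cases (dist b c + dist (x m) (y n)) (dist b (y n) + dist c (x m)) with h3 | h3 <;>
    linarith

/-- Let `X` be δ-hyperbolic (four-point condition), `{x i}` a sequence
tending to infinity, and `g` an isometry of `X` such that `{g (x i)}` is equivalent to
`{x i}` (i.e. `g` fixes the corresponding boundary point). Then for every `a ∈ X`,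
`|η_x(g a) − η_x(a) − η_x(g (x 0))| ≤ 16δ`. -/
theorem quasi_horofunction_isometry
    (X : Type*) [MetricSpace X]
    (δ : ℝ) (hδ : 0 ≤ δ)
    (hhyp : ∀ p₁ p₂ p₃ p₄ : X,
      dist p₁ p₄ + dist p₂ p₃ ≤
        max (dist p₁ p₂ + dist p₃ p₄) (dist p₁ p₃ + dist p₂ p₄) + 2 * δ)
    (x : ℕ → X)
    -- `{x i}` tends to infinity
    (hx : Tendsto
      (fun p : ℕ × ℕ =>
        (dist (x p.1) (x 0) + dist (x p.2) (x 0) - dist (x p.1) (x p.2)) / 2)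
      atTop atTop)
    (g : X ≃ᵢ X)
    -- `{g (x i)}` is equivalent to `{x i}`
    (hg : Tendsto
      (fun p : ℕ × ℕ =>
        (dist (x p.1) (x 0) + dist (g (x p.2)) (x 0) - dist (x p.1) (g (x p.2))) / 2)
      atTop atTop)
    (a : X) :
    |limsup (fun m => dist (g a) (x m) - dist (x 0) (x m)) atTop -
      limsup (fun m => dist a (x m) - dist (x 0) (x m)) atTop -
      limsup (fun m => dist (g (x 0)) (x m) - dist (x 0) (x m)) atTop| ≤ 16 * δ := by
  obtain ⟨N1, h1⟩ := qh_key δ hhyp x (fun n => g (x n)) (x 0) hg (g a) (g (x 0))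
  obtain ⟨N2, h2⟩ := qh_key δ hhyp x (fun n => g (x n)) (x 0) hg (g (x 0)) (g a)
  obtain ⟨N3, h3⟩ := qh_key δ hhyp x x (x 0) hx (g a) (x 0)
  obtain ⟨N4, h4⟩ := qh_key δ hhyp x x (x 0) hx a (x 0)
  obtain ⟨N5, h5⟩ := qh_key δ hhyp x x (x 0) hx (g (x 0)) (x 0)
  obtain ⟨N, hN⟩ : ∃ N, N1 ≤ N ∧ N2 ≤ N ∧ N3 ≤ N ∧ N4 ≤ N ∧ N5 ≤ N :=
    ⟨N1 + N2 + N3 + N4 + N5, by omega⟩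
  have k1 := h1 N (by omega) N (by omega)
  have k2 := h2 N (by omega) N (by omega)
  simp only [g.dist_eq] at k1 k2
  have osc : ∀ (b : X) (M : ℕ), M ≤ N → (∀ m ≥ M, ∀ n ≥ M,
      dist b (x m) - dist (x 0) (x m) - (dist b (x n) - dist (x 0) (x n)) ≤ 2 * δ) →
      |limsup (fun m => dist b (x m) - dist (x 0) (x m)) atTop -
        (dist b (x N) - dist (x 0) (x N))| ≤ 2 * δ := by
    intro b M hM h
    refine qh_limsup (fun m => dist b (x m) - dist (x 0) (x m)) (2 * δ) N fun m hm => ?_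
    have e1 := h m (by omega) N hM
    have e2 := h N hM m (by omega)
    rw [abs_le]
    constructor <;> linarith
  have a3 := abs_le.1 (osc _ N3 (by omega) h3)
  have a4 := abs_le.1 (osc _ N4 (by omega) h4)
  have a5 := abs_le.1 (osc _ N5 (by omega) h5)
  rw [abs_le]
  constructor <;> linarith [a3.1, a3.2, a4.1, a4.2, a5.1, a5.2]
end

section
/- Let X be a metric space that is δ-hyperbolic (four-point condition) for some δ ≥ 0, let a group G act on X by isometries, and let x = {x_i} be a sequence in X tending to infinity with basepoint x₀ such that for every g ∈ G the sequence {g·x_i} is equivalent to {x_i}. Then the function q_x : G → ℝ defined by q_x(g) = η_x(g·x₀) is a quasicharacter of defect at most 16δ: for all g,h ∈ G, |q_x(gh) − q_x(g) − q_x(h)| ≤ 16δ. Here η_x(a) = limsup_{n→∞} (d(a,x_n) − d(x₀,x_n)). -/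
open Filter

lemma qh_limsup_near (u : ℕ → ℝ) (c : ℝ) (N : ℕ)
    (h : ∀ m ≥ N, ∀ n ≥ N, |u m - u n| ≤ c) (m : ℕ) (hm : N ≤ m) :
    |limsup u atTop - u m| ≤ c := by
  have h1 : ∀ᶠ n in atTop, u n ≤ u m + c := by
    filter_upwards [eventually_ge_atTop N] with n hn
    have := (abs_le.1 (h m hm n hn)).1
    linarith
  have h2 : ∀ᶠ n in atTop, u m - c ≤ u n := by
    filter_upwards [eventually_ge_atTop N] with n hn
    have := (abs_le.1 (h m hm n hn)).2
    linarith
  have b1 : IsBoundedUnder (· ≤ ·) atTop u := ⟨u m + c, by simpa using h1⟩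
  have b2 : IsBoundedUnder (· ≥ ·) atTop u := ⟨u m - c, by simpa using h2⟩
  have l1 : limsup u atTop ≤ u m + c := limsup_le_of_le b2.isCoboundedUnder_le h1
  have l2 : u m - c ≤ limsup u atTop := le_limsup_of_frequently_le h2.frequently b1
  rw [abs_le]
  constructor <;> linarith

lemma qh_near {X : Type*} [MetricSpace X] (δ : ℝ)
    (hhyp : ∀ p₁ p₂ p₃ p₄ : X,
      dist p₁ p₄ + dist p₂ p₃ ≤
        max (dist p₁ p₂ + dist p₃ p₄) (dist p₁ p₃ + dist p₂ p₄) + 2 * δ)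
    (o : X) (y z : ℕ → X)
    (h : Tendsto (fun p : ℕ × ℕ =>
        (dist (y p.1) o + dist (z p.2) o - dist (y p.1) (z p.2)) / 2) atTop atTop)
    (a b : X) :
    ∃ N : ℕ, ∀ m ≥ N, ∀ n ≥ N,
      |(dist a (y m) - dist b (y m)) - (dist a (z n) - dist b (z n))| ≤ 2 * δ := by
  obtain ⟨⟨N1, N2⟩, hN⟩ := eventually_atTop.1
    (h.eventually_gt_atTop ((dist o a + dist o b + dist a b + 2 * δ) / 2))
  refine ⟨max N1 N2, fun m hm n hn => ?_⟩
  have hP := hN (m, n) ⟨le_trans (le_max_left _ _) hm, le_trans (le_max_right _ _) hn⟩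
  simp only at hP
  have t1 := dist_triangle (y m) a o
  have t2 := dist_triangle (z n) b o
  have t3 := dist_triangle (y m) b o
  have t4 := dist_triangle (z n) a o
  have k1 := hhyp a b (z n) (y m)
  have k2 := hhyp a b (y m) (z n)
  rw [dist_comm (y m) a, dist_comm a o] at t1
  rw [dist_comm (z n) b, dist_comm b o] at t2
  rw [dist_comm (y m) b, dist_comm b o] at t3
  rw [dist_comm (z n) a, dist_comm a o] at t4
  rw [dist_comm (z n) (y m)] at k1
  rw [abs_le]
  constructor
  · rcases max_cases (dist a b + dist (y m) (z n)) (dist a (y m) + dist b (z n)) with h | h <;>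
      linarith
  · rcases max_cases (dist a b + dist (y m) (z n)) (dist a (z n) + dist b (y m)) with h | h <;>
      linarith

/-- Let `X` be δ-hyperbolic (four-point condition), let `G` act on `X` by
isometries, and let `{x i}` tend to infinity with `{g (x i)}` equivalent to `{x i}` for
every `g ∈ G`. Then `q_x(g) = η_x(g (x 0))` is a quasicharacter of defect at most `16δ`. -/
theorem quasi_horofunction_quasicharacter
    (X : Type*) [MetricSpace X]
    (δ : ℝ) (hδ : 0 ≤ δ)
    (hhyp : ∀ p₁ p₂ p₃ p₄ : X,
      dist p₁ p₄ + dist p₂ p₃ ≤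
        max (dist p₁ p₂ + dist p₃ p₄) (dist p₁ p₃ + dist p₂ p₄) + 2 * δ)
    (G : Type*) [Group G] (ρ : G →* (X ≃ᵢ X))
    (x : ℕ → X)
    -- `{x i}` tends to infinity
    (hx : Tendsto
      (fun p : ℕ × ℕ =>
        (dist (x p.1) (x 0) + dist (x p.2) (x 0) - dist (x p.1) (x p.2)) / 2)
      atTop atTop)
    -- every `g ∈ G` fixes the boundary point of `{x i}`: `{g (x i)}` is equivalent to `{x i}`
    (hfix : ∀ g : G, Tendsto
      (fun p : ℕ × ℕ =>
        (dist (x p.1) (x 0) + dist (ρ g (x p.2)) (x 0) - dist (x p.1) (ρ g (x p.2))) / 2)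
      atTop atTop) :
    ∀ g h : G,
      |limsup (fun m => dist (ρ (g * h) (x 0)) (x m) - dist (x 0) (x m)) atTop -
        limsup (fun m => dist (ρ g (x 0)) (x m) - dist (x 0) (x m)) atTop -
        limsup (fun m => dist (ρ h (x 0)) (x m) - dist (x 0) (x m)) atTop| ≤ 16 * δ := by
  intro g h
  obtain ⟨N1, h1⟩ := qh_near δ hhyp (x 0) x x hx (ρ (g * h) (x 0)) (x 0)
  obtain ⟨N2, h2⟩ := qh_near δ hhyp (x 0) x x hx (ρ g (x 0)) (x 0)
  obtain ⟨N3, h3⟩ := qh_near δ hhyp (x 0) x x hx (ρ h (x 0)) (x 0)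
  obtain ⟨N4, h4⟩ := qh_near δ hhyp (x 0) x (fun n => ρ g (x n)) (hfix g)
    (ρ (g * h) (x 0)) (ρ g (x 0))
  obtain ⟨m, m1, m2, m3, m4⟩ : ∃ m, N1 ≤ m ∧ N2 ≤ m ∧ N3 ≤ m ∧ N4 ≤ m :=
    ⟨N1 + N2 + N3 + N4, by omega, by omega, by omega, by omega⟩
  have e1 := abs_le.1 (qh_limsup_near _ _ N1 h1 m m1)
  have e2 := abs_le.1 (qh_limsup_near _ _ N2 h2 m m2)
  have e3 := abs_le.1 (qh_limsup_near _ _ N3 h3 m m3)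
  have e4 := abs_le.1 (h4 m m4 m m4)
  have i1 : dist (ρ (g * h) (x 0)) (ρ g (x m)) = dist (ρ h (x 0)) (x m) := by
    rw [map_mul]
    exact (ρ g).dist_eq _ _
  have i2 : dist (ρ g (x 0)) (ρ g (x m)) = dist (x 0) (x m) := (ρ g).dist_eq _ _
  rw [i1, i2] at e4
  rw [abs_le]
  constructor <;> linarith [e1.1, e1.2, e2.1, e2.2, e3.1, e3.2, e4.1, e4.2]
end

section
/- Let X be a geodesic metric space that is δ-hyperbolic (four-point condition) for some δ ≥ 0, let a group G act on X by isometries, and let x = {x_i} be a sequence in X tending to infinity with basepoint x₀ such that for every g ∈ G the sequence {g·x_i} is equivalent to {x_i}. For g ∈ G set q_x(g) = η_x(g·x₀), where η_x(a) = limsup_{n→∞} (d(a,x_n) − d(x₀,x_n)). Then for every g ∈ G the limit p_x(g) = lim_{n→∞} q_x(gⁿ)/n exists, and p_x(g) ≠ 0 if and only if g acts hyperbolically on X, i.e. if and only if the map ℤ → X, k ↦ gᵏ·x₀, is a quasi-isometric embedding. -/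
open Filter

theorem aux_close {X : Type*} [MetricSpace X] (δ : ℝ)
    (hhyp : ∀ p₁ p₂ p₃ p₄ : X,
      dist p₁ p₄ + dist p₂ p₃ ≤
        max (dist p₁ p₂ + dist p₃ p₄) (dist p₁ p₃ + dist p₂ p₄) + 2 * δ)
    (o : X) (x y : ℕ → X)
    (h : Tendsto
      (fun p : ℕ × ℕ =>
        (dist (x p.1) o + dist (y p.2) o - dist (x p.1) (y p.2)) / 2)
      atTop atTop) (a b : X) :
    ∀ᶠ p : ℕ × ℕ in atTop,
      |(dist a (x p.1) - dist b (x p.1)) - (dist a (y p.2) - dist b (y p.2))| ≤ 2 * δ := by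
  filter_upwards [h.eventually_ge_atTop (dist a o + dist b o)] with p hp
  generalize x p.1 = u at *
  generalize y p.2 = v at *
  have h1 := hhyp a b v u
  have h2 := hhyp a b u v
  have t1 := dist_triangle_left u o a
  have t2 := dist_triangle_left v o b
  have t3 := dist_triangle_left v o a
  have t4 := dist_triangle_left u o b
  have t5 := dist_triangle_right a b o
  rw [dist_comm v u] at h1
  rw [max_eq_right (by linarith)] at h1
  rw [max_eq_right (by linarith)] at h2
  rw [abs_le]
  constructor <;> linarith

theorem aux_limsup (f : ℕ → ℝ) (c ε : ℝ) (h : ∀ᶠ m in atTop, |f m - c| ≤ ε) :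
    |limsup f atTop - c| ≤ ε := by
  have hu : ∀ᶠ m in atTop, f m ≤ c + ε := h.mono fun m hm => by
    have := (abs_le.1 hm).2; linarith
  have hl : ∀ᶠ m in atTop, c - ε ≤ f m := h.mono fun m hm => by
    have := (abs_le.1 hm).1; linarith
  have hbu : IsBoundedUnder (· ≤ ·) atTop f := ⟨c + ε, by simpa using hu⟩
  have hbl : IsBoundedUnder (· ≥ ·) atTop f := ⟨c - ε, by simpa using hl⟩
  have h1 : limsup f atTop ≤ c + ε := limsup_le_of_le hbl.isCoboundedUnder_le hu
  have h2 : c - ε ≤ limsup f atTop := le_limsup_of_frequently_le hl.frequently hbu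
  rw [abs_le]
  constructor <;> linarith

/-- homogenization of a quasimorphism on ℕ -/
theorem aux_hom (a : ℕ → ℝ) (D B : ℝ) (hB : ∀ n : ℕ, |a n| ≤ n * B)
    (hq : ∀ i j, |a (i + j) - a i - a j| ≤ D) :
    ∃ L : ℝ, Tendsto (fun n : ℕ => a n / n) atTop (nhds L) ∧
      ∀ n : ℕ, |a n - n * L| ≤ D := by
  have hD : 0 ≤ D := (abs_nonneg _).trans (hq 0 0)
  have key : ∀ b : ℕ → ℝ, (∀ n : ℕ, |b n| ≤ n * B) →
      (∀ i j, |b (i + j) - b i - b j| ≤ D) →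
      ∃ L : ℝ, Tendsto (fun n : ℕ => b n / n) atTop (nhds L) ∧
        ∀ n : ℕ, n * L ≤ b n + D := by
    intro b hB hq
    have hs : Subadditive (fun n => b n + D) := by
      intro i j
      have := (abs_le.1 (hq i j)).2
      simp only
      linarith
    have hbdd : BddBelow (Set.range fun n : ℕ => (b n + D) / n) := by
      refine ⟨-|B|, ?_⟩
      rintro _ ⟨n, rfl⟩
      simp only
      rcases Nat.eq_zero_or_pos n with rfl | hn
      · simp
      · have hn' : (0 : ℝ) < n := by exact_mod_cast hn
        rw [le_div_iff₀ hn']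
        have h1 := (abs_le.1 (hB n)).1
        have h2 : n * B ≤ n * |B| := by gcongr; exact le_abs_self B
        linarith
    refine ⟨hs.lim, ?_, ?_⟩
    · have h1 := hs.tendsto_lim hbdd
      have h2 : Tendsto (fun n : ℕ => D / (n : ℝ)) atTop (nhds 0) :=
        tendsto_const_div_atTop_nhds_zero_nat D
      have h3 := h1.sub h2
      simp only [sub_zero] at h3
      refine h3.congr fun n => ?_
      ring
    · intro n
      rcases Nat.eq_zero_or_pos n with rfl | hn
      · have : b 0 = 0 := by
          have := hB 0
          simpa using this
        simp [this, hD]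
      · have hn' : (0 : ℝ) < n := by exact_mod_cast hn
        have := hs.lim_le_div hbdd hn.ne'
        rw [le_div_iff₀ hn'] at this
        linarith
  obtain ⟨L, hL, hL'⟩ := key a hB hq
  obtain ⟨M, hM, hM'⟩ := key (fun n => - a n) (by simpa using hB) (by
    intro i j
    have := hq i j
    rw [← abs_neg] at this
    convert this using 2
    ring)
  have hML : M = -L := by
    refine tendsto_nhds_unique hM (hL.neg.congr fun n => ?_)
    ring
  refine ⟨L, hL, fun n => ?_⟩
  have h1 := hL' n
  have h2 := hM' n
  rw [hML] at h2
  rw [abs_le]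
  constructor <;> linarith

/-- Let `X` be a geodesic δ-hyperbolic space, `G` acting by isometries,
and `{x i}` a sequence tending to infinity whose boundary point is fixed by every `g ∈ G`.
Setting `q_x(g) = η_x(g (x 0))`, the limit `p_x(g) = lim q_x(gⁿ)/n` exists for every `g`,
and `p_x(g) ≠ 0` iff `g` acts hyperbolically (the orbit map `ℤ → X`, `k ↦ gᵏ·x 0`, is a
quasi-isometric embedding). -/
theorem pseudocharacter_detects_hyperbolics
    (X : Type*) [MetricSpace X]
    -- `X` is geodesic
    (hgeo : ∀ a b : X, ∃ f : ℝ → X, f 0 = a ∧ f (dist a b) = b ∧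
      ∀ s ∈ Set.Icc (0 : ℝ) (dist a b), ∀ u ∈ Set.Icc (0 : ℝ) (dist a b),
        dist (f s) (f u) = |s - u|)
    (δ : ℝ) (hδ : 0 ≤ δ)
    (hhyp : ∀ p₁ p₂ p₃ p₄ : X,
      dist p₁ p₄ + dist p₂ p₃ ≤
        max (dist p₁ p₂ + dist p₃ p₄) (dist p₁ p₃ + dist p₂ p₄) + 2 * δ)
    (G : Type*) [Group G] (ρ : G →* (X ≃ᵢ X))
    (x : ℕ → X)
    -- `{x i}` tends to infinity
    (hx : Tendsto
      (fun p : ℕ × ℕ =>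
        (dist (x p.1) (x 0) + dist (x p.2) (x 0) - dist (x p.1) (x p.2)) / 2)
      atTop atTop)
    -- every `g ∈ G` fixes the boundary point of `{x i}`
    (hfix : ∀ g : G, Tendsto
      (fun p : ℕ × ℕ =>
        (dist (x p.1) (x 0) + dist (ρ g (x p.2)) (x 0) - dist (x p.1) (ρ g (x p.2))) / 2)
      atTop atTop)
    (g : G) :
    ∃ L : ℝ,
      Tendsto (fun n : ℕ =>
        (limsup (fun m => dist (ρ (g ^ n) (x 0)) (x m) - dist (x 0) (x m)) atTop) / n)
        atTop (nhds L) ∧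
      (L ≠ 0 ↔ ∃ Kq Cq : ℝ, 1 ≤ Kq ∧ 0 ≤ Cq ∧
        ∀ k l : ℤ, dist k l / Kq - Cq ≤ dist (ρ (g ^ k) (x 0)) (ρ (g ^ l) (x 0)) ∧
          dist (ρ (g ^ k) (x 0)) (ρ (g ^ l) (x 0)) ≤ Kq * dist k l + Cq) := by
  set o := x 0 with ho
  have hdist : ∀ (k : G) (a b : X), dist (ρ k a) (ρ k b) = dist a b :=
    fun k a b => (ρ k).isometry.dist_eq a b
  have hmul : ∀ (k l : G) (a : X), ρ (k * l) a = ρ k (ρ l a) := by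
    intro k l a
    rw [map_mul]; rfl
  set d : ℕ → ℝ := fun n => dist (ρ (g ^ n) o) o with hd
  have hsub : ∀ i j : ℕ, dist (ρ (g ^ (i + j)) o) (ρ (g ^ i) o) = d j := by
    intro i j
    rw [pow_add, hmul, hdist]
  have hd0 : d 0 = 0 := by simp [hd]
  have hd1 : ∀ n : ℕ, d n ≤ n * d 1 := by
    intro n
    induction n with
    | zero => simp [hd0]
    | succ n ih =>
      have h1 := dist_triangle (ρ (g ^ (n + 1)) o) (ρ (g ^ n) o) o
      rw [hsub] at h1
      have h2 : d (n + 1) ≤ d 1 + d n := h1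
      push_cast
      linarith
  have hdz : ∀ k l : ℤ, dist (ρ (g ^ k) o) (ρ (g ^ l) o) = d (k - l).natAbs := by
    have main : ∀ (l : ℤ) (n : ℕ), dist (ρ (g ^ (l + n)) o) (ρ (g ^ l) o) = d n := by
      intro l n
      rw [zpow_add, hmul, hdist, zpow_natCast]
    intro k l
    rcases le_total l k with h | h
    · have := main l (k - l).natAbs
      rwa [show l + ((k - l).natAbs : ℤ) = k by omega] at this
    · have := main k (k - l).natAbs
      rwa [show k + ((k - l).natAbs : ℤ) = l by omega, dist_comm] at this
  have hdistz : ∀ k l : ℤ, dist k l = ((k - l).natAbs : ℝ) := by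
    intro k l
    rw [Int.dist_eq, Nat.cast_natAbs]
    push_cast
    rfl
  set a : ℕ → ℝ := fun n =>
    limsup (fun m => dist (ρ (g ^ n) o) (x m) - dist o (x m)) atTop with ha
  have hadef : ∀ n, limsup (fun m => dist (ρ (g ^ n) o) (x m) - dist o (x m)) atTop = a n :=
    fun n => rfl
  have happ : ∀ n, ∀ᶠ m in atTop,
      |(dist (ρ (g ^ n) o) (x m) - dist o (x m)) - a n| ≤ 4 * δ := by
    intro n
    have h := aux_close δ hhyp o x x hx (ρ (g ^ n) o) o
    rw [eventually_atTop] at h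
    obtain ⟨⟨N1, N2⟩, hN⟩ := h
    have h2 := aux_limsup (fun m => dist (ρ (g ^ n) o) (x m) - dist o (x m))
      (dist (ρ (g ^ n) o) (x N2) - dist o (x N2)) (2 * δ)
      (by
        filter_upwards [eventually_ge_atTop N1] with m hm
        exact hN (m, N2) ⟨hm, le_rfl⟩)
    rw [hadef, abs_le] at h2
    filter_upwards [eventually_ge_atTop N1] with m hm
    have h3 := abs_le.1 (hN (m, N2) ⟨hm, le_rfl⟩)
    simp only at h3
    rw [abs_le]
    constructor <;> linarith [h2.1, h2.2, h3.1, h3.2]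
  have had : ∀ n, |a n| ≤ d n := by
    intro n
    have := aux_limsup (fun m => dist (ρ (g ^ n) o) (x m) - dist o (x m)) 0 (d n)
      (Eventually.of_forall fun m => by
        rw [sub_zero]
        exact abs_dist_sub_le _ _ _)
    rwa [hadef, sub_zero] at this
  have hq : ∀ i j, |a (i + j) - a i - a j| ≤ 14 * δ := by
    intro i j
    have h := aux_close δ hhyp o x (fun m => ρ (g ^ i) (x m)) (hfix (g ^ i))
      (ρ (g ^ (i + j)) o) (ρ (g ^ i) o)
    rw [← prod_atTop_atTop_eq] at h
    have e1 := (tendsto_fst (f := (atTop : Filter ℕ)) (g := (atTop : Filter ℕ))).eventually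
      ((happ (i + j)).and (happ i))
    have e2 := (tendsto_snd (f := (atTop : Filter ℕ)) (g := (atTop : Filter ℕ))).eventually
      (happ j)
    obtain ⟨p, hp, ⟨hp1, hp2⟩, hp3⟩ := (h.and (e1.and e2)).exists
    rw [pow_add, hmul, hdist, hdist] at hp
    rw [pow_add, hmul] at hp1
    rw [abs_le] at *
    constructor <;> linarith [hp.1, hp.2, hp1.1, hp1.2, hp2.1, hp2.2, hp3.1, hp3.2]
  obtain ⟨L, hL, hLD⟩ := aux_hom a (14 * δ) (d 1) (fun n => (had n).trans (hd1 n)) hq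
  have hd1' : 0 ≤ d 1 := dist_nonneg
  refine ⟨L, hL, ?_, ?_⟩
  · intro hL0
    have hLp : 0 < |L| := abs_pos.2 hL0
    refine ⟨1 + d 1 + |L|⁻¹, 14 * δ, ?_, by positivity, ?_⟩
    · have : 0 < |L|⁻¹ := by positivity
      linarith
    intro k l
    rw [hdz, hdistz]
    generalize (k - l).natAbs = n
    have hn : (0 : ℝ) ≤ n := by positivity
    have hLi : 0 < |L|⁻¹ := by positivity
    constructor
    · have h1 : n * |L| ≤ d n + 14 * δ := by
        have h2 := abs_sub_abs_le_abs_sub (n * L) (a n)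
        rw [abs_sub_comm, abs_mul, abs_of_nonneg hn] at h2
        linarith [hLD n, had n]
      have h2 : (n : ℝ) / (1 + d 1 + |L|⁻¹) ≤ n * |L| := by
        rw [div_le_iff₀ (by positivity)]
        have : (n : ℝ) * |L| * |L|⁻¹ = n := by
          rw [mul_assoc, mul_inv_cancel₀ hLp.ne', mul_one]
        nlinarith [mul_nonneg (mul_nonneg hn hLp.le) hd1', mul_nonneg hn hLp.le]
      linarith
    · have := hd1 n
      nlinarith [mul_nonneg hn hLi.le]
  · rintro ⟨K, C, hK, hC, hqi⟩ hL0
    subst hL0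
    have hab : ∀ n, |a n| ≤ 14 * δ := by simpa using hLD
    -- doubling
    have hdbl : ∀ n, d (n + n) ≤ d n + 40 * δ := by
      intro n
      obtain ⟨m, hm1, hm2⟩ := ((happ n).and (happ (n + n))).exists
      have h4 := hhyp o (ρ (g ^ n) o) (x m) (ρ (g ^ (n + n)) o)
      have hA := abs_le.1 (hab n)
      have hB := abs_le.1 (hab (n + n))
      have e1 : dist o (ρ (g ^ (n + n)) o) = d (n + n) := dist_comm _ _
      have e2 : dist o (ρ (g ^ n) o) = d n := dist_comm _ _
      have e3 : dist (ρ (g ^ n) o) (ρ (g ^ (n + n)) o) = d n := by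
        rw [dist_comm, hsub]
      rw [e1, e2, e3, dist_comm (x m)] at h4
      rw [abs_le] at hm1 hm2
      rcases max_cases (d n + dist (ρ (g ^ (n + n)) o) (x m)) (dist o (x m) + d n) with h | h
      · rw [h.1] at h4
        linarith [hm1.1, hm1.2, hm2.1, hm2.2]
      · rw [h.1] at h4
        linarith [hm1.1, hm1.2, hm2.1, hm2.2]
    have hpow : ∀ k : ℕ, d (2 ^ k) ≤ d 1 + k * (40 * δ) := by
      intro k
      induction k with
      | zero => simp
      | succ k ih =>
        have := hdbl (2 ^ k)
        rw [← two_mul, ← pow_succ'] at this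
        push_cast
        linarith
    have hlow : ∀ k : ℕ, (2 : ℝ) ^ k ≤ K * (C + d 1) + k * (K * (40 * δ)) := by
      intro k
      have h1 := (hqi ((2 ^ k : ℕ) : ℤ) 0).1
      rw [hdz, hdistz] at h1
      simp only [sub_zero, Int.natAbs_natCast] at h1
      have h2 : ((2 ^ k : ℕ) : ℝ) / K ≤ C + (d 1 + k * (40 * δ)) := by linarith [hpow k]
      rw [div_le_iff₀ (by linarith)] at h2
      push_cast at h2
      linarith
    have ht1 : Tendsto (fun k : ℕ => (k : ℝ) ^ 1 / (2 : ℝ) ^ k) atTop (nhds 0) :=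
      tendsto_pow_const_div_const_pow_of_one_lt 1 (by norm_num)
    have ht0 : Tendsto (fun k : ℕ => (k : ℝ) ^ 0 / (2 : ℝ) ^ k) atTop (nhds 0) :=
      tendsto_pow_const_div_const_pow_of_one_lt 0 (by norm_num)
    have ht := (ht0.const_mul (K * (C + d 1))).add (ht1.const_mul (K * (40 * δ)))
    simp only [mul_zero, add_zero] at ht
    have hge : (1 : ℝ) ≤ 0 := by
      refine ge_of_tendsto' ht fun k => ?_
      have hp : (0 : ℝ) < 2 ^ k := by positivity
      have e : K * (C + d 1) * ((k : ℝ) ^ 0 / 2 ^ k) + K * (40 * δ) * ((k : ℝ) ^ 1 / 2 ^ k)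
          = (K * (C + d 1) + k * (K * (40 * δ))) / 2 ^ k := by
        field_simp
      rw [e, le_div_iff₀ hp, one_mul]
      exact hlow k
    linarith
end

section
/- Let G be a group generated by a finite set S, acting by isometries on a geodesic metric space X that is δ-hyperbolic (four-point condition) for some δ ≥ 0. If g ∈ G acts hyperbolically on X (for some x ∈ X the map ℤ → X, k ↦ gᵏ·x, is a quasi-isometric embedding), then g is undistorted in G: there exist constants K ≥ 1 and C ≥ 0 such that for all n ∈ ℤ, |n| ≤ K·ℓ_S(gⁿ) + C, where ℓ_S(h) denotes the word length of h, i.e. the least m such that h is a product of m elements of S ∪ S⁻¹. -/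
/-- The word length of `h` with respect to a generating set `S`: the least `m` such that
`h` is a product of `m` elements of `S ∪ S⁻¹`. -/
noncomputable def wordLength {G : Type*} [Group G] (S : Set G) (h : G) : ℕ :=
  sInf {m | ∃ l : List G, (∀ a ∈ l, a ∈ S ∨ a⁻¹ ∈ S) ∧ l.length = m ∧ l.prod = h}

/-- If a group `G`, generated by a finite set `S`, acts by isometries on a
geodesic δ-hyperbolic space `X`, and `g ∈ G` acts hyperbolically, then `g` is undistorted:
there are `K ≥ 1`, `C ≥ 0` with `|n| ≤ K · ℓ_S(gⁿ) + C` for all `n ∈ ℤ`. -/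
theorem hyperbolic_element_undistorted
    (G : Type*) [Group G] (S : Set G) (hSfin : S.Finite)
    (hSgen : Subgroup.closure S = ⊤)
    (X : Type*) [MetricSpace X]
    -- `X` is geodesic
    (hgeo : ∀ a b : X, ∃ f : ℝ → X, f 0 = a ∧ f (dist a b) = b ∧
      ∀ s ∈ Set.Icc (0 : ℝ) (dist a b), ∀ u ∈ Set.Icc (0 : ℝ) (dist a b),
        dist (f s) (f u) = |s - u|)
    -- `X` is δ-hyperbolic (four-point condition)
    (δ : ℝ) (hδ : 0 ≤ δ)
    (hhyp : ∀ p₁ p₂ p₃ p₄ : X,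
      dist p₁ p₄ + dist p₂ p₃ ≤
        max (dist p₁ p₂ + dist p₃ p₄) (dist p₁ p₃ + dist p₂ p₄) + 2 * δ)
    -- the action of `G` on `X`
    (ρ : G →* (X ≃ᵢ X))
    (g : G)
    -- `g` acts hyperbolically: for some `x`, `k ↦ gᵏ·x` is a quasi-isometric embedding
    (hgyp : ∃ (x : X) (Kq Cq : ℝ), 1 ≤ Kq ∧ 0 ≤ Cq ∧
      ∀ k l : ℤ, dist k l / Kq - Cq ≤ dist (ρ (g ^ k) x) (ρ (g ^ l) x) ∧
        dist (ρ (g ^ k) x) (ρ (g ^ l) x) ≤ Kq * dist k l + Cq) :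
    ∃ K C : ℝ, 1 ≤ K ∧ 0 ≤ C ∧
      ∀ n : ℤ, (|n| : ℝ) ≤ K * (wordLength S (g ^ n) : ℝ) + C := by
  obtain ⟨x, Kq, Cq, hK, hC, hq⟩ := hgyp
  obtain ⟨M₀, hM₀⟩ := (hSfin.image (fun s => dist (ρ s x) x)).bddAbove
  obtain ⟨M, hM1, hM⟩ : ∃ M : ℝ, 1 ≤ M ∧ ∀ s ∈ S, dist (ρ s x) x ≤ M :=
    ⟨max 1 M₀, le_max_left _ _, fun s hs =>
      (hM₀ (Set.mem_image_of_mem _ hs)).trans (le_max_right _ _)⟩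
  have hM' : ∀ a : G, a ∈ S ∨ a⁻¹ ∈ S → dist (ρ a x) x ≤ M := by
    rintro a (ha | ha)
    · exact hM a ha
    · have h := hM _ ha
      rw [← (ρ a).dist_eq, ← IsometryEquiv.mul_apply, ← map_mul, mul_inv_cancel, map_one,
        IsometryEquiv.coe_one, id, dist_comm] at h
      exact h
  have hlist : ∀ l : List G, (∀ a ∈ l, a ∈ S ∨ a⁻¹ ∈ S) →
      dist (ρ l.prod x) x ≤ M * l.length := by
    intro l
    induction l with
    | nil => intro _; simp
    | cons a t ih =>
      intro h
      have h1 := ih (fun b hb => h b (List.mem_cons_of_mem _ hb))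
      have h2 := hM' a (h a List.mem_cons_self)
      rw [List.prod_cons, map_mul, IsometryEquiv.mul_apply]
      have h3 := dist_triangle (ρ a (ρ t.prod x)) (ρ a x) x
      rw [(ρ a).dist_eq] at h3
      push_cast [List.length_cons]
      linarith
  refine ⟨Kq * M, Kq * Cq, one_le_mul_of_one_le_of_one_le hK hM1, by positivity, fun n => ?_⟩
  have hne : {m | ∃ l : List G, (∀ a ∈ l, a ∈ S ∨ a⁻¹ ∈ S) ∧ l.length = m ∧
      l.prod = g ^ n}.Nonempty := by
    obtain ⟨l, hl, hp⟩ := Submonoid.exists_list_of_mem_closure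
      (show g ^ n ∈ Submonoid.closure (S ∪ S⁻¹) by
        rw [← Subgroup.closure_toSubmonoid, hSgen]; trivial)
    exact ⟨l.length, l, hl, rfl, hp⟩
  obtain ⟨l, hl, hlen, hp⟩ := Nat.sInf_mem hne
  have h1 := hlist l hl
  rw [hp, hlen] at h1
  have h2 := (hq n 0).1
  rw [zpow_zero, map_one, IsometryEquiv.coe_one, id, Int.dist_eq, Int.cast_zero, sub_zero] at h2
  have hpos : 0 < Kq := by linarith
  have h3 : |(n : ℝ)| / Kq ≤ M * (wordLength S (g ^ n) : ℝ) + Cq := by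
    unfold wordLength
    linarith
  rw [div_le_iff₀ hpos] at h3
  linarith
end

section
/- Let X be a metric space that is δ-hyperbolic (four-point condition) for some δ ≥ 0, and let J ≥ 0. Let A = {(a,b) ∈ X × X : d(a,b) ≤ J}, equipped with the pseudometric D((a₁,b₁),(a₂,b₂)) = d(a₁,a₂) + d(b₁,b₂). Then (A, D) satisfies the four-point condition with constant 2δ + 4J: for all q₁, q₂, q₃, q₄ ∈ A, D(q₁,q₄) + D(q₂,q₃) ≤ max(D(q₁,q₂) + D(q₃,q₄), D(q₁,q₃) + D(q₂,q₄)) + 2(2δ + 4J). -/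
/-- Let `X` be δ-hyperbolic (four-point condition) and `J ≥ 0`. Then the
set of pairs of points of `X` at distance at most `J`, with the sum pseudometric
`D((a₁,b₁),(a₂,b₂)) = d(a₁,a₂) + d(b₁,b₂)`, satisfies the four-point condition with
constant `2δ + 4J`. -/
theorem pairs_space_four_point
    (X : Type*) [MetricSpace X]
    (δ : ℝ) (hδ : 0 ≤ δ)
    (hhyp : ∀ p₁ p₂ p₃ p₄ : X,
      dist p₁ p₄ + dist p₂ p₃ ≤
        max (dist p₁ p₂ + dist p₃ p₄) (dist p₁ p₃ + dist p₂ p₄) + 2 * δ)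
    (J : ℝ) (hJ : 0 ≤ J)
    (q₁ q₂ q₃ q₄ : X × X)
    (h₁ : dist q₁.1 q₁.2 ≤ J) (h₂ : dist q₂.1 q₂.2 ≤ J)
    (h₃ : dist q₃.1 q₃.2 ≤ J) (h₄ : dist q₄.1 q₄.2 ≤ J) :
    (dist q₁.1 q₄.1 + dist q₁.2 q₄.2) + (dist q₂.1 q₃.1 + dist q₂.2 q₃.2) ≤
      max ((dist q₁.1 q₂.1 + dist q₁.2 q₂.2) + (dist q₃.1 q₄.1 + dist q₃.2 q₄.2))
        ((dist q₁.1 q₃.1 + dist q₁.2 q₃.2) + (dist q₂.1 q₄.1 + dist q₂.2 q₄.2)) +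
      2 * (2 * δ + 4 * J) := by
  have key : ∀ p q : X × X, dist p.1 p.2 ≤ J → dist q.1 q.2 ≤ J →
      dist p.1 q.1 ≤ dist p.2 q.2 + 2 * J ∧ dist p.2 q.2 ≤ dist p.1 q.1 + 2 * J := by
    intro p q hp hq
    have e1 := dist_triangle4 p.1 p.2 q.2 q.1
    have e2 := dist_triangle4 p.2 p.1 q.1 q.2
    rw [dist_comm q.2 q.1] at e1
    rw [dist_comm p.2 p.1] at e2
    constructor <;> linarith
  have k14 := key q₁ q₄ h₁ h₄
  have k23 := key q₂ q₃ h₂ h₃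
  have k12 := key q₁ q₂ h₁ h₂
  have k34 := key q₃ q₄ h₃ h₄
  have k13 := key q₁ q₃ h₁ h₃
  have k24 := key q₂ q₄ h₂ h₄
  have m1 := le_max_left ((dist q₁.1 q₂.1 + dist q₁.2 q₂.2) + (dist q₃.1 q₄.1 + dist q₃.2 q₄.2))
        ((dist q₁.1 q₃.1 + dist q₁.2 q₃.2) + (dist q₂.1 q₄.1 + dist q₂.2 q₄.2))
  have m2 := le_max_right ((dist q₁.1 q₂.1 + dist q₁.2 q₂.2) + (dist q₃.1 q₄.1 + dist q₃.2 q₄.2))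
        ((dist q₁.1 q₃.1 + dist q₁.2 q₃.2) + (dist q₂.1 q₄.1 + dist q₂.2 q₄.2))
  have h := hhyp q₁.1 q₂.1 q₃.1 q₄.1
  rcases max_choice (dist q₁.1 q₂.1 + dist q₃.1 q₄.1) (dist q₁.1 q₃.1 + dist q₂.1 q₄.1) with e | e
  · rw [e] at h
    linarith [k14.2, k23.2, k12.1, k34.1]
  · rw [e] at h
    linarith [k14.2, k23.2, k13.1, k24.1]
end

section
/- Let X be a geodesic metric space that is δ-hyperbolic (four-point condition) for some δ ≥ 0, let a group G act on X by isometries, and let x ∈ X. If the orbit G·x is unbounded (i.e. sup_{g ∈ G} d(g·x, x) = ∞), then the boundary of X is nonempty in the following sense: there exists a sequence of elements g_i ∈ G such that the sequence {g_i·x} tends to infinity, i.e. lim_{i,j→∞, i≠j} (g_i·x, g_j·x)_x = ∞. -/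
theorem boundary_aux {G : Type*} [Group G] (D : G → G → ℝ) (δ : ℝ) (hδ : 0 ≤ δ)
    (h0 : ∀ g, D g g = 0) (hs : ∀ g h, D g h = D h g)
    (hl : ∀ k g h, D (k * g) (k * h) = D g h)
    (hyp : ∀ p₁ p₂ p₃ p₄ : G, D p₁ p₄ + D p₂ p₃ ≤
        max (D p₁ p₂ + D p₃ p₄) (D p₁ p₃ + D p₂ p₄) + 2 * δ)
    (hunb : ∀ M : ℝ, ∃ g : G, M < D g 1) :
    ∃ g : ℕ → G, ∀ M : ℝ, ∃ N : ℕ, ∀ i j : ℕ, N ≤ i → N ≤ j → i ≠ j →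
      M ≤ (D (g i) 1 + D (g j) 1 - D (g i) (g j)) / 2 := by
  have hinv : ∀ g, D g⁻¹ 1 = D g 1 := fun g => by
    rw [← hl g, hs]; simp
  by_cases hA : ∃ u : G, D u 1 + 2 * δ + 1 ≤ D (u ^ 2) 1
  · -- some element has a translation: use its powers
    obtain ⟨u, hu⟩ := hA
    have hpow : ∀ n k : ℕ, D (u ^ (n + k)) (u ^ n) = D (u ^ k) 1 := fun n k => by
      rw [pow_add, ← hl (u ^ n) (u ^ k) 1, mul_one]
    have hstep : ∀ n : ℕ, D (u ^ n) 1 + (if n = 0 then 0 else 1) ≤ D (u ^ (n + 1)) 1 := by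
      have key : ∀ n : ℕ, D (u ^ (n + 1)) 1 + 1 ≤ D (u ^ (n + 2)) 1 := by
        intro n
        induction n with
        | zero => simp; linarith
        | succ n ih =>
          have h := hyp (u ^ 2) (u ^ (n + 3)) u 1
          have e1 : D (u ^ (n + 3)) u = D (u ^ (n + 2)) 1 := by
            have := hpow 1 (n + 2)
            rwa [show 1 + (n + 2) = n + 3 by omega, pow_one] at this
          have e2 : D (u ^ 2) (u ^ (n + 3)) = D (u ^ (n + 1)) 1 := by
            have := hpow 2 (n + 1)
            rwa [show 2 + (n + 1) = n + 3 by omega, hs] at this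
          have e3 : D (u ^ 2) u = D u 1 := by
            have := hpow 1 1
            simpa using this
          rw [e1, e2, e3] at h
          change D (u ^ (n + 2)) 1 + 1 ≤ D (u ^ (n + 3)) 1
          rcases max_cases (D (u ^ (n + 1)) 1 + D u 1) (D u 1 + D (u ^ (n + 3)) 1) with c | c <;>
            linarith
      intro n
      rcases n with _ | n
      · have h := hyp u 1 1 u
        have hh := hyp (u) u 1 1
        simp only [h0, hs 1 u, max_self] at h hh
        simp [h0]
        have h5 := hyp (u ^ 2) 1 1 1
        have h6 := hyp (u ^ 2) u u 1
        have e3 : D (u ^ 2) u = D u 1 := by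
          have := hpow 1 1
          simpa using this
        rw [e3, h0, max_self] at h6
        linarith
      · simpa using key n
    have hmono : Monotone fun n : ℕ => D (u ^ n) 1 := by
      apply monotone_nat_of_le_succ
      intro n
      have := hstep n
      split_ifs at this <;> linarith
    have hlin : ∀ n : ℕ, (n : ℝ) ≤ D (u ^ n) 1 + 1 := by
      intro n
      induction n with
      | zero => simp [h0]
      | succ n ih =>
        have := hstep n
        push_cast
        split_ifs at this with hn
        · subst hn
          simp [h0] at this ⊢
          linarith
        · linarith
    refine ⟨fun n => u ^ n, fun M => ?_⟩
    obtain ⟨N, hN⟩ := exists_nat_ge (2 * M + 1)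
    have main : ∀ i j : ℕ, N ≤ i → i ≤ j →
        M ≤ (D (u ^ i) 1 + D (u ^ j) 1 - D (u ^ i) (u ^ j)) / 2 := by
      intro i j hi hij
      obtain ⟨k, rfl⟩ := Nat.exists_eq_add_of_le hij
      have h1 := hpow i k
      have h2 : D (u ^ k) 1 ≤ D (u ^ (i + k)) 1 := hmono (by omega)
      have h3 := hlin i
      have h4 : (N : ℝ) ≤ i := by exact_mod_cast hi
      rw [hs (u ^ i) (u ^ (i + k)), h1]
      linarith
    refine ⟨N, fun i j hi hj _ => ?_⟩
    rcases le_total i j with h | h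
    · exact main i j hi h
    · have := main j i hj h
      rw [hs] 
      simp only [hs (u ^ i) (u ^ j)]
      rw [hs 1]
      linarith
  · -- no such element: all products are large
    push Not at hA
    have hG : ∀ p q r : G, D q 1 + D p r ≤ D p 1 + D q r + 2 * δ ∨
        D q 1 + D p r ≤ D r 1 + D p q + 2 * δ := by
      intro p q r
      have h := hyp p q r 1
      have h := hyp q p r 1
      have h' := hs p q
      rcases max_cases (D q p + D r 1) (D q r + D p 1) with c | c
      · right; linarith
      · left; linarith
    have main : ∀ (g h : G) (m : ℝ), m ≤ D g 1 → m ≤ D h 1 →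
        m - 20 * δ - 20 ≤ D g 1 + D h 1 - D g h := by
      intro g h m hg hh
      by_contra hcon
      push Not at hcon
      have e1 : D g⁻¹ h = D (g * h) 1 := by rw [← hl g, hs]; simp
      have e2 : D h⁻¹ g = D (h * g) 1 := by rw [← hl h, hs]; simp
      have e3 : D g g⁻¹ = D (g ^ 2) 1 := by rw [← hl g]; simp [pow_two]
      have e4 : D h h⁻¹ = D (h ^ 2) 1 := by rw [← hl h]; simp [pow_two]
      have e5 : D (g * h)⁻¹ h⁻¹ = D g 1 := by
        rw [← hl (g * h), hs]; simp
      have e6 : D (g * h) g = D h 1 := by rw [← hl g h 1, mul_one]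
      have e7 : D (g * h) (g * h)⁻¹ = D ((g * h) ^ 2) 1 := by
        rw [← hl (g * h)]; simp [pow_two]
      have i1 := hinv g
      have i2 := hinv h
      have i3 := hinv (g * h)
      have a1 := hA g
      have a2 := hA h
      have a3 := hA (g * h)
      have s1 := hs h⁻¹ g
      have s2 := hs h⁻¹ h
      have s3 := hs (g * h) g
      have s4 := hs (g * h) (g * h)⁻¹
      -- (g⁻¹, h) is small
      have A : D g 1 + D h 1 - D (g * h) 1 ≤ D g 1 + D h 1 - D g h + 2 * δ := by
        rcases hG g g⁻¹ h with c | c <;> linarith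
      have B : D g 1 + D h 1 - D (h * g) 1 ≤ D g 1 + D h 1 - D g h + 2 * δ := by
        rcases hG g h⁻¹ h with c | c <;> linarith
      have E : D (g * h) 1 + D g 1 - D (g * h)⁻¹ g ≤ D g 1 + D h 1 - D (h * g) 1 + 2 * δ := by
        rcases hG h⁻¹ (g * h)⁻¹ g with c | c
        · linarith
        · have s5 := hs h⁻¹ (g * h)⁻¹
          linarith
      have F : D (g * h) 1 + D (g * h) 1 - D ((g * h) ^ 2) 1 ≤
          D (g * h) 1 + D g 1 - D (g * h)⁻¹ g + 2 * δ := by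
        rcases hG (g * h)⁻¹ (g * h) g with c | c <;> linarith
      linarith
    choose g hg using fun n : ℕ => hunb n
    refine ⟨g, fun M => ?_⟩
    obtain ⟨N, hN⟩ := exists_nat_ge (2 * M + 20 * δ + 20)
    refine ⟨N, fun i j hi hj _ => ?_⟩
    have h1 : (N : ℝ) ≤ i := by exact_mod_cast hi
    have h2 : (N : ℝ) ≤ j := by exact_mod_cast hj
    have := main (g i) (g j) N (h1.trans (hg i).le) (h2.trans (hg j).le)
    linarith

/-- Let a group `G` act by isometries on a geodesic δ-hyperbolic space `X`
with an unbounded orbit `G·x`. Then there is a sequence `gᵢ ∈ G` such that `{gᵢ·x}` tends to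
infinity: the Gromov products `(gᵢ·x, gⱼ·x)_x` tend to infinity as `i, j → ∞` with `i ≠ j`. -/
theorem unbounded_orbit_gives_boundary_point
    (X : Type*) [MetricSpace X]
    -- `X` is geodesic
    (hgeo : ∀ a b : X, ∃ f : ℝ → X, f 0 = a ∧ f (dist a b) = b ∧
      ∀ s ∈ Set.Icc (0 : ℝ) (dist a b), ∀ u ∈ Set.Icc (0 : ℝ) (dist a b),
        dist (f s) (f u) = |s - u|)
    -- `X` is δ-hyperbolic (four-point condition)
    (δ : ℝ) (hδ : 0 ≤ δ)
    (hhyp : ∀ p₁ p₂ p₃ p₄ : X,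
      dist p₁ p₄ + dist p₂ p₃ ≤
        max (dist p₁ p₂ + dist p₃ p₄) (dist p₁ p₃ + dist p₂ p₄) + 2 * δ)
    (G : Type*) [Group G] (ρ : G →* (X ≃ᵢ X))
    (x : X)
    -- the orbit `G·x` is unbounded
    (hunb : ∀ M : ℝ, ∃ g : G, M < dist (ρ g x) x) :
    ∃ g : ℕ → G, ∀ M : ℝ, ∃ N : ℕ, ∀ i j : ℕ, N ≤ i → N ≤ j → i ≠ j →
      M ≤ (dist (ρ (g i) x) x + dist (ρ (g j) x) x - dist (ρ (g i) x) (ρ (g j) x)) / 2 := by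
  have h := boundary_aux (G := G) (fun g h => dist (ρ g x) (ρ h x)) δ hδ
    (fun g => dist_self _) (fun g h => dist_comm _ _)
    (fun k g h => by simpa [map_mul, IsometryEquiv.mul_apply] using (ρ k).isometry.dist_eq _ _)
    (fun p₁ p₂ p₃ p₄ => hhyp _ _ _ _)
    (fun M => by
      obtain ⟨g, hg⟩ := hunb M
      exact ⟨g, by simpa using hg⟩)
  simpa using h
end
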